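/- arXiv:2104.05236 — 3 statements merged into one kernel-verified Lean document; each statement's English description precedes it below -/
import Mathlib

section
/- Let Λ = diag(λ₁,…,λ_s) and Λ_A = diag(α₁,…,α_s) be real diagonal s×s matrices with λ₁ ≥ λ₂ ≥ … ≥ λ_s ≥ 0 and 1 ≥ α₁ ≥ α₂ ≥ … ≥ α_s ≥ 0, and let Q be a unitary s×s complex matrix. Then det(I_s + Λ − Q Λ_A Qᴴ) ≤ ∏_{i=1}^{s} (1 + λ_i − α_i), and consequently det(I_s − Q Λ_A Qᴴ (I_s + Λ)⁻¹) ≤ ∏_{i=1}^{s} (1 − α_i/(1+λ_i)). -/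
open Matrix ComplexOrder

/-!
Put `A = 1 + Λ` and `B = Q Λ_A Qᴴ`, with decreasing eigenvalues `a` and `b`, and `C = A - B`, with
eigenvalues `η`. The matrix `A + (t - C)₊` dominates both `A` and `B + t`, so by the monotonicity
of sorted eigenvalues (Weyl) its trace is at least `∑ max(aᵢ, bᵢ + t)`, that is
`∑ (t - (aᵢ - bᵢ))₊ ≤ ∑ (t - ηᵢ)₊`.
Together with the equality of the traces this says that `η` majorizes `a - b` (Lidskii). As `-log`
is, up to an affine function, a superposition of the functions `x ↦ (t - x)₊` with weights `t⁻²`,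
it follows that `det C = ∏ ηᵢ ≤ ∏ (aᵢ - bᵢ)`. The second bound is the first one divided by `det A`.
-/

section Karamata

open Set

variable {ι : Type*} [Fintype ι]

theorem integral_max_sub_mul_eq {f f' f'' : ℝ → ℝ} {m M x : ℝ} (hx : x ∈ Icc m M)
    (hf : ∀ t ∈ Icc m M, HasDerivAt f (f' t) t) (hf' : ∀ t ∈ Icc m M, HasDerivAt f' (f'' t) t)
    (hf'' : ContinuousOn f'' (Icc m M)) :
    ∫ t in m..M, max (t - x) 0 * f'' t = f x - f M + (M - x) * f' M := by
  have hcont : ContinuousOn (fun t => max (t - x) 0 * f'' t) (Icc m M) := by fun_prop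
  have hleft : ∫ t in m..x, max (t - x) 0 * f'' t = 0 := by
    refine intervalIntegral.integral_zero_ae (.of_forall fun t ht => ?_)
    rw [uIoc_of_le hx.1] at ht
    rw [max_eq_right (sub_nonpos.2 ht.2), zero_mul]
  have hright : ∫ t in x..M, max (t - x) 0 * f'' t =
      ((M - x) * f' M - f M) - ((x - x) * f' x - f x) := by
    refine intervalIntegral.integral_eq_sub_of_hasDerivAt
      (f := fun t => (t - x) * f' t - f t) (fun t ht => ?_) ?_
    · rw [uIcc_of_le hx.2] at ht
      have htm : t ∈ Icc m M := ⟨hx.1.trans ht.1, ht.2⟩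
      rw [max_eq_left (sub_nonneg.2 ht.1)]
      exact ((((hasDerivAt_id t).sub_const x).mul (hf' t htm)).sub (hf t htm)).congr_deriv
        (by simp only [id]; ring)
    · exact (hcont.mono (Icc_subset_Icc_left hx.1)).intervalIntegrable_of_Icc hx.2
  rw [← intervalIntegral.integral_add_adjacent_intervals
    ((hcont.mono (Icc_subset_Icc_right hx.2)).intervalIntegrable_of_Icc hx.1)
    ((hcont.mono (Icc_subset_Icc_left hx.1)).intervalIntegrable_of_Icc hx.2), hleft, hright]
  ring

theorem sum_comp_le_sum_comp_of_sum_max_sub_le {f f' f'' : ℝ → ℝ} {m M : ℝ} {c η : ι → ℝ}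
    (hf : ∀ t ∈ Icc m M, HasDerivAt f (f' t) t) (hf' : ∀ t ∈ Icc m M, HasDerivAt f' (f'' t) t)
    (hf'' : ContinuousOn f'' (Icc m M)) (hf''_nonneg : ∀ t ∈ Icc m M, 0 ≤ f'' t)
    (hc : ∀ i, c i ∈ Icc m M) (hη : ∀ i, η i ∈ Icc m M) (hsum : ∑ i, c i = ∑ i, η i)
    (h : ∀ t ∈ Icc m M, ∑ i, max (t - c i) 0 ≤ ∑ i, max (t - η i) 0) :
    ∑ i, f (c i) ≤ ∑ i, f (η i) := by
  cases isEmpty_or_nonempty ι with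
  | inl _ => simp
  | inr hι =>
  have hmM : m ≤ M := (hc hι.some).1.trans (hc hι.some).2
  have sum_eq_integral {x : ι → ℝ} (hx : ∀ i, x i ∈ Icc m M) :
      ∑ i, f (x i) = (∫ t in m..M, (∑ i, max (t - x i) 0) * f'' t) +
        ∑ i, (f M - (M - x i) * f' M) := by
    simp only [Finset.sum_mul]
    rw [intervalIntegral.integral_finsetSum fun i _ =>
      ContinuousOn.intervalIntegrable_of_Icc hmM (by fun_prop), ← Finset.sum_add_distrib]
    refine Finset.sum_congr rfl fun i _ => ?_
    rw [integral_max_sub_mul_eq (hx i) hf hf' hf'']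
    ring
  have hlinear : ∑ i, (f M - (M - c i) * f' M) = ∑ i, (f M - (M - η i) * f' M) := by
    simp only [Finset.sum_sub_distrib, ← Finset.sum_mul, hsum]
  rw [sum_eq_integral hc, sum_eq_integral hη, hlinear]
  gcongr
  exact intervalIntegral.integral_mono_on hmM
    (ContinuousOn.intervalIntegrable_of_Icc hmM (by fun_prop))
    (ContinuousOn.intervalIntegrable_of_Icc hmM (by fun_prop))
    fun t ht => mul_le_mul_of_nonneg_right (h t ht) (hf''_nonneg t ht)

theorem le_of_sum_max_sub_le {c η : ι → ℝ} {r : ℝ}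
    (h : ∑ i, max (r - c i) 0 ≤ ∑ i, max (r - η i) 0) (hη : ∀ i, r ≤ η i) (i : ι) : r ≤ c i := by
  have hη0 : ∑ i, max (r - η i) 0 = 0 :=
    Finset.sum_eq_zero fun i _ => max_eq_right (sub_nonpos.2 (hη i))
  have hle : max (r - c i) 0 ≤ ∑ i, max (r - c i) 0 :=
    Finset.single_le_sum (f := fun i => max (r - c i) 0) (fun i _ => le_max_right _ _)
      (Finset.mem_univ i)
  linarith [le_max_left (r - c i) 0]

theorem prod_le_prod_of_sum_max_sub_le {c η : ι → ℝ} (hη : ∀ i, 0 ≤ η i)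
    (hsum : ∑ i, c i = ∑ i, η i)
    (h : ∀ t, ∑ i, max (t - c i) 0 ≤ ∑ i, max (t - η i) 0) : ∏ i, η i ≤ ∏ i, c i := by
  cases isEmpty_or_nonempty ι
  · simp
  obtain ⟨k, hk⟩ := Finite.exists_min η
  have hkc : ∀ i, η k ≤ c i := le_of_sum_max_sub_le (h (η k)) hk
  have hc : ∀ i, 0 ≤ c i := fun i => (hη k).trans (hkc i)
  rcases (hη k).eq_or_lt with hk0 | hk0
  · rw [Finset.prod_eq_zero (Finset.mem_univ k) hk0.symm]
    exact Finset.prod_nonneg fun i _ => hc i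
  have hpos : ∀ t ∈ Icc (η k) (∑ i, η i), t ≠ 0 := fun t ht => (hk0.trans_le ht.1).ne'
  have hlog : ∑ i, -Real.log (c i) ≤ ∑ i, -Real.log (η i) := by
    refine sum_comp_le_sum_comp_of_sum_max_sub_le (f := fun t => -Real.log t)
      (f' := fun t => -t⁻¹) (f'' := fun t => (t ^ 2)⁻¹)
      (fun t ht => (Real.hasDerivAt_log (hpos t ht)).neg)
      (fun t ht => (hasDerivAt_inv (hpos t ht)).neg.congr_deriv (neg_neg _))
      (ContinuousOn.inv₀ (by fun_prop) fun t ht => pow_ne_zero 2 (hpos t ht))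
      (fun t _ => by positivity) (fun i => ⟨hkc i, ?_⟩) (fun i => ⟨hk i, ?_⟩) hsum fun t _ => h t
    · exact hsum ▸ Finset.single_le_sum (fun i _ => hc i) (Finset.mem_univ i)
    · exact Finset.single_le_sum (fun i _ => hη i) (Finset.mem_univ i)
  have hcpos : ∀ i, 0 < c i := fun i => hk0.trans_le (hkc i)
  have hηpos : ∀ i, 0 < η i := fun i => hk0.trans_le (hk i)
  rw [← Real.log_le_log_iff (Finset.prod_pos fun i _ => hηpos i)
    (Finset.prod_pos fun i _ => hcpos i), Real.log_prod fun i _ => (hηpos i).ne',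
    Real.log_prod fun i _ => (hcpos i).ne']
  simpa using hlog

end Karamata

theorem det_one_sub_mul_inv {R n : Type*} [CommRing R] [Fintype n] [DecidableEq n]
    (M : Matrix n n R) {D : Matrix n n R} (hD : IsUnit D.det) :
    (1 - M * D⁻¹).det = (D - M).det * Ring.inverse D.det := by
  rw [← mul_nonsing_inv D hD, ← Matrix.sub_mul, det_mul, det_nonsing_inv]

section UnitaryDiag

open scoped MatrixOrder

variable {𝕜 n : Type*} [RCLike 𝕜] [Fintype n] [DecidableEq n]

/-- The Hermitian matrix `U diag(x) Uᴴ`, with eigenvalues `x` and eigenvectors the columns of `U`,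
in the form in which `Matrix.IsHermitian.spectral_theorem` diagonalizes a Hermitian matrix. -/
def unitaryDiag (U : unitaryGroup n 𝕜) (x : n → ℝ) : Matrix n n 𝕜 :=
  Unitary.conjStarAlgAut 𝕜 _ U (diagonal (RCLike.ofReal ∘ x))

theorem unitaryDiag_eq_mul (U : unitaryGroup n 𝕜) (x : n → ℝ) :
    unitaryDiag U x = U * diagonal (fun i => (x i : 𝕜)) * (U : Matrix n n 𝕜)ᴴ :=
  Unitary.conjStarAlgAut_apply U _

theorem unitaryDiag_one (x : n → ℝ) :
    unitaryDiag (1 : unitaryGroup n 𝕜) x = diagonal (fun i => (x i : 𝕜)) := by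
  simp [unitaryDiag_eq_mul]

theorem unitaryDiag_const (U : unitaryGroup n 𝕜) (t : ℝ) :
    unitaryDiag U (fun _ => t) = diagonal (fun _ => (t : 𝕜)) := by
  have hU : (U : Matrix n n 𝕜) * (U : Matrix n n 𝕜)ᴴ = 1 := mem_unitaryGroup_iff.1 U.2
  rw [unitaryDiag_eq_mul, ← smul_one_eq_diagonal, Matrix.mul_smul, Matrix.mul_one,
    Matrix.smul_mul, hU]

theorem unitaryDiag_add (U : unitaryGroup n 𝕜) (x y : n → ℝ) :
    unitaryDiag U (x + y) = unitaryDiag U x + unitaryDiag U y := by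
  have hdiag : (diagonal (RCLike.ofReal ∘ (x + y)) : Matrix n n 𝕜) =
      diagonal (RCLike.ofReal ∘ x) + diagonal (RCLike.ofReal ∘ y) := by
    simp [diagonal_add, Function.comp_def]
  rw [unitaryDiag, hdiag, map_add, unitaryDiag, unitaryDiag]

theorem trace_unitaryDiag (U : unitaryGroup n 𝕜) (x : n → ℝ) :
    (unitaryDiag U x).trace = ((∑ i, x i : ℝ) : 𝕜) := by
  have hU : (U : Matrix n n 𝕜)ᴴ * (U : Matrix n n 𝕜) = 1 := mem_unitaryGroup_iff'.1 U.2
  rw [unitaryDiag_eq_mul, trace_mul_cycle, hU, Matrix.one_mul, trace_diagonal, RCLike.ofReal_sum]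

theorem det_unitaryDiag (U : unitaryGroup n 𝕜) (x : n → ℝ) :
    (unitaryDiag U x).det = ((∏ i, x i : ℝ) : 𝕜) := by
  have hU : (U : Matrix n n 𝕜)ᴴ * (U : Matrix n n 𝕜) = 1 := mem_unitaryGroup_iff'.1 U.2
  rw [unitaryDiag_eq_mul, mul_assoc, det_mul_comm, mul_assoc, hU, Matrix.mul_one, det_diagonal,
    RCLike.ofReal_prod]

theorem posSemidef_unitaryDiag_iff {U : unitaryGroup n 𝕜} {x : n → ℝ} :
    (unitaryDiag U x).PosSemidef ↔ 0 ≤ x := by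
  rw [unitaryDiag_eq_mul, ← star_eq_conjTranspose,
    IsUnit.posSemidef_star_right_conjugate_iff Unitary.isUnit_coe, posSemidef_diagonal_iff]
  exact forall_congr' fun i => RCLike.ofReal_nonneg

theorem unitaryDiag_mono (U : unitaryGroup n 𝕜) : Monotone (unitaryDiag U) := fun x y hxy => by
  have hdiff : 0 ≤ unitaryDiag U (y - x) :=
    nonneg_iff_posSemidef.2 (posSemidef_unitaryDiag_iff.2 (sub_nonneg.2 hxy))
  simpa [← unitaryDiag_add] using add_le_add_right hdiff (unitaryDiag U x)

theorem unitaryDiag_le_unitaryDiag_of_forall_le {U V : unitaryGroup n 𝕜} {x y : n → ℝ}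
    (h : ∀ i j, x i ≤ y j) : unitaryDiag U x ≤ unitaryDiag V y := by
  cases isEmpty_or_nonempty n
  · exact (Subsingleton.elim _ _).le
  obtain ⟨j, hj⟩ := Finite.exists_min y
  calc unitaryDiag U x ≤ unitaryDiag U (fun _ => y j) := unitaryDiag_mono U fun i => h i j
    _ = unitaryDiag V (fun _ => y j) := by rw [unitaryDiag_const, unitaryDiag_const]
    _ ≤ unitaryDiag V y := unitaryDiag_mono V hj

theorem isHermitian_unitaryDiag (U : unitaryGroup n 𝕜) (x : n → ℝ) :
    (unitaryDiag U x).IsHermitian := by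
  rw [IsHermitian, ← star_eq_conjTranspose, unitaryDiag, ← map_star, star_eq_conjTranspose,
    diagonal_conjTranspose]
  congr
  ext i
  simp

theorem star_dotProduct_unitaryDiag_mulVec (U : unitaryGroup n 𝕜) (x : n → ℝ) (v : n → 𝕜) :
    star v ⬝ᵥ (unitaryDiag U x *ᵥ v) =
      ((∑ j, x j * ‖((U : Matrix n n 𝕜)ᴴ *ᵥ v) j‖ ^ 2 : ℝ) : 𝕜) := by
  rw [unitaryDiag_eq_mul, ← mulVec_mulVec, ← mulVec_mulVec, dotProduct_mulVec,
    ← star_star (star v ᵥ* (U : Matrix n n 𝕜)), star_vecMul, star_star, dotProduct,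
    RCLike.ofReal_sum]
  refine Finset.sum_congr rfl fun j _ => ?_
  rw [mulVec_diagonal, Pi.star_apply, RCLike.star_def, mul_left_comm, RCLike.conj_mul]
  push_cast
  rfl

theorem sum_norm_sq_conjTranspose_mulVec (U : unitaryGroup n 𝕜) (v : n → 𝕜) :
    ∑ j, ‖((U : Matrix n n 𝕜)ᴴ *ᵥ v) j‖ ^ 2 = ∑ j, ‖v j‖ ^ 2 := by
  have hU := star_dotProduct_unitaryDiag_mulVec U (fun _ => 1) v
  have hone := star_dotProduct_unitaryDiag_mulVec 1 (fun _ => 1) v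
  rw [unitaryDiag_const] at hU hone
  simpa using RCLike.ofReal_injective (hU.symm.trans hone)

theorem sum_mul_norm_sq_le_of_unitaryDiag_le {U V : unitaryGroup n 𝕜} {x y : n → ℝ}
    (h : unitaryDiag U x ≤ unitaryDiag V y) (v : n → 𝕜) :
    ∑ j, x j * ‖((U : Matrix n n 𝕜)ᴴ *ᵥ v) j‖ ^ 2 ≤
      ∑ j, y j * ‖((V : Matrix n n 𝕜)ᴴ *ᵥ v) j‖ ^ 2 := by
  have hnonneg := (le_iff.1 h).dotProduct_mulVec_nonneg v
  rwa [sub_mulVec, dotProduct_sub, star_dotProduct_unitaryDiag_mulVec,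
    star_dotProduct_unitaryDiag_mulVec, sub_nonneg, RCLike.ofReal_le_ofReal] at hnonneg

theorem exists_ne_zero_forall_lt_mulVec_eq_zero {K ι : Type*} [Field K] [Fintype ι]
    [LinearOrder ι] (M : Matrix ι ι K) (i : ι) :
    ∃ p : ι → K, p ≠ 0 ∧ (∀ j, i < j → p j = 0) ∧ ∀ j < i, (M *ᵥ p) j = 0 := by
  let constraints : (ι → K) →ₗ[K] ({j // j ≠ i} → K) :=
    LinearMap.pi fun j =>
      if j.1 < i then LinearMap.proj j.1 ∘ₗ M.mulVecLin else LinearMap.proj j.1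
  have hker : LinearMap.ker constraints ≠ ⊥ := LinearMap.ker_ne_bot_of_finrank_lt <| by
    simpa only [Module.finrank_fintype_fun_eq_card] using
      Fintype.card_subtype_lt (p := (· ≠ i)) (x := i) (by simp)
  obtain ⟨p, hp, hp0⟩ := Submodule.exists_mem_ne_zero_of_ne_bot hker
  refine ⟨p, hp0, fun j hj => ?_, fun j hj => ?_⟩
  · simpa [constraints, hj.not_gt] using congrFun hp ⟨j, hj.ne'⟩
  · simpa [constraints, hj] using congrFun hp ⟨j, hj.ne⟩

theorem le_of_unitaryDiag_le_unitaryDiag [LinearOrder n] {U V : unitaryGroup n 𝕜} {x y : n → ℝ}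
    (hx : Antitone x) (hy : Antitone y) (h : unitaryDiag U x ≤ unitaryDiag V y) : x ≤ y := by
  intro i
  obtain ⟨p, hp0, hp, hq⟩ := exists_ne_zero_forall_lt_mulVec_eq_zero
    ((V : Matrix n n 𝕜)ᴴ * (U : Matrix n n 𝕜)) i
  rw [← mulVec_mulVec] at hq
  set v : n → 𝕜 := (U : Matrix n n 𝕜) *ᵥ p
  set q : n → 𝕜 := (V : Matrix n n 𝕜)ᴴ *ᵥ v with hqv
  have hpv : (U : Matrix n n 𝕜)ᴴ *ᵥ v = p := by
    rw [mulVec_mulVec, ← star_eq_conjTranspose, mem_unitaryGroup_iff'.1 U.2, one_mulVec]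
  have hnorm : ∑ j, ‖q j‖ ^ 2 = ∑ j, ‖p j‖ ^ 2 := by
    rw [← hpv, hqv, sum_norm_sq_conjTranspose_mulVec, sum_norm_sq_conjTranspose_mulVec]
  have hnorm_pos : 0 < ∑ j, ‖p j‖ ^ 2 := by
    obtain ⟨j, hj⟩ := Function.ne_iff.1 hp0
    exact Finset.sum_pos' (fun _ _ => by positivity)
      ⟨j, Finset.mem_univ _, pow_pos (norm_pos_iff.2 hj) 2⟩
  have hform : ∑ j, x j * ‖p j‖ ^ 2 ≤ ∑ j, y j * ‖q j‖ ^ 2 := by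
    simpa only [hpv] using sum_mul_norm_sq_le_of_unitaryDiag_le h v
  refine le_of_mul_le_mul_right ?_ hnorm_pos
  calc x i * ∑ j, ‖p j‖ ^ 2 ≤ ∑ j, x j * ‖p j‖ ^ 2 := by
        rw [Finset.mul_sum]
        refine Finset.sum_le_sum fun j _ => ?_
        rcases le_or_gt j i with hj | hj
        · exact mul_le_mul_of_nonneg_right (hx hj) (by positivity)
        · simp [hp j hj]
    _ ≤ ∑ j, y j * ‖q j‖ ^ 2 := hform
    _ ≤ y i * ∑ j, ‖q j‖ ^ 2 := by
        rw [Finset.mul_sum]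
        refine Finset.sum_le_sum fun j _ => ?_
        rcases le_or_gt i j with hj | hj
        · exact mul_le_mul_of_nonneg_right (hy hj) (by positivity)
        · simp [hq j hj]
    _ = y i * ∑ j, ‖p j‖ ^ 2 := by rw [hnorm]

theorem exists_unitaryDiag_eq_comp_perm (U : unitaryGroup n 𝕜) (x : n → ℝ) (σ : Equiv.Perm n) :
    ∃ V, unitaryDiag U x = unitaryDiag V (x ∘ σ) := by
  have hV : (U : Matrix n n 𝕜).submatrix id σ ∈ unitaryGroup n 𝕜 := by
    rw [mem_unitaryGroup_iff, star_eq_conjTranspose, conjTranspose_submatrix, submatrix_mul_equiv,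
      ← star_eq_conjTranspose, mem_unitaryGroup_iff.1 U.2, submatrix_id_id]
  have hdiag : diagonal (fun i => ((x ∘ σ) i : 𝕜)) =
      (diagonal fun i => (x i : 𝕜)).submatrix σ σ :=
    (submatrix_diagonal_equiv (fun i => (x i : 𝕜)) σ).symm
  refine ⟨⟨_, hV⟩, ?_⟩
  simp only [unitaryDiag_eq_mul, hdiag, conjTranspose_submatrix, submatrix_mul_equiv,
    submatrix_id_id]

theorem exists_antitone_unitaryDiag_eq [LinearOrder n] {A : Matrix n n 𝕜} (hA : A.IsHermitian) :
    ∃ U x, Antitone x ∧ A = unitaryDiag U x := by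
  let e : n ≃o Fin (Fintype.card n) := (Fintype.orderIsoFinOfCardEq n rfl).symm
  let σ : Equiv.Perm n := e.toEquiv.trans (Fintype.equivOfCardEq (Fintype.card_fin _))
  obtain ⟨U, hU⟩ := exists_unitaryDiag_eq_comp_perm hA.eigenvectorUnitary hA.eigenvalues σ
  refine ⟨U, hA.eigenvalues ∘ σ, fun i j hij => ?_, hA.spectral_theorem.trans hU⟩
  simpa [IsHermitian.eigenvalues, σ] using hA.eigenvalues₀_antitone (e.monotone hij)

theorem sum_max_le_trace_of_unitaryDiag_le [LinearOrder n] {U V : unitaryGroup n 𝕜} {x y : n → ℝ}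
    {A : Matrix n n 𝕜} (hx : Antitone x) (hy : Antitone y) (hxA : unitaryDiag U x ≤ A)
    (hyA : unitaryDiag V y ≤ A) : ((∑ i, max (x i) (y i) : ℝ) : 𝕜) ≤ A.trace := by
  have hA : A.IsHermitian := by
    simpa using (le_iff.1 hxA).isHermitian.add (isHermitian_unitaryDiag U x)
  obtain ⟨W, z, hz, rfl⟩ := exists_antitone_unitaryDiag_eq hA
  rw [trace_unitaryDiag, RCLike.ofReal_le_ofReal]
  exact Finset.sum_le_sum fun i _ => max_le (le_of_unitaryDiag_le_unitaryDiag hx hz hxA i)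
    (le_of_unitaryDiag_le_unitaryDiag hy hz hyA i)

theorem sum_max_sub_le_of_unitaryDiag_eq_add [LinearOrder n] {U V W : unitaryGroup n 𝕜}
    {a b η : n → ℝ} (ha : Antitone a) (hb : Antitone b)
    (h : unitaryDiag U a = unitaryDiag V b + unitaryDiag W η) (t : ℝ) :
    ∑ i, max (t - (a i - b i)) 0 ≤ ∑ i, max (t - η i) 0 := by
  set r : n → ℝ := fun i => max (t - η i) 0
  have hr : 0 ≤ unitaryDiag W r :=
    nonneg_iff_posSemidef.2 (posSemidef_unitaryDiag_iff.2 fun i => le_max_right _ _)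
  have hU : unitaryDiag U a ≤ unitaryDiag U a + unitaryDiag W r := le_add_of_nonneg_right hr
  have hV : unitaryDiag V (b + fun _ => t) ≤ unitaryDiag U a + unitaryDiag W r := calc
    unitaryDiag V (b + fun _ => t) = unitaryDiag V b + unitaryDiag W (fun _ => t) := by
      rw [unitaryDiag_add, unitaryDiag_const, unitaryDiag_const]
    _ ≤ unitaryDiag V b + unitaryDiag W (η + r) := by
      gcongr
      exact unitaryDiag_mono W fun i => sub_le_iff_le_add'.1 (le_max_left (t - η i) 0)
    _ = unitaryDiag U a + unitaryDiag W r := by rw [unitaryDiag_add, h, add_assoc]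
  have htrace : ∑ i, max (a i) (b i + t) ≤ ∑ i, a i + ∑ i, r i := by
    have := sum_max_le_trace_of_unitaryDiag_le ha (hb.add_const t) hU hV
    rw [trace_add, trace_unitaryDiag, trace_unitaryDiag] at this
    exact_mod_cast this
  have hmax (i : n) : max (t - (a i - b i)) 0 = max (a i) (b i + t) - a i := by
    rw [← max_sub_sub_right, sub_self, max_comm]
    congr 1
    ring
  simp only [hmax, Finset.sum_sub_distrib]
  linarith

theorem det_unitaryDiag_sub_unitaryDiag_le {U V : unitaryGroup n 𝕜} {a b : n → ℝ}
    (hab : Monovary a b) (h : unitaryDiag V b ≤ unitaryDiag U a) :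
    (unitaryDiag U a - unitaryDiag V b).det ≤ ((∏ i, (a i - b i) : ℝ) : 𝕜) := by
  obtain ⟨_, ha, hb⟩ := hab.exists_antitone
  have hpos : (unitaryDiag U a - unitaryDiag V b).PosSemidef := h
  obtain ⟨W, η, -, hη⟩ := exists_antitone_unitaryDiag_eq hpos.isHermitian
  have heq : unitaryDiag U a = unitaryDiag V b + unitaryDiag W η := eq_add_of_sub_eq' hη
  have hsum : ∑ i, (a i - b i) = ∑ i, η i := by
    have htrace := congrArg trace hη
    rw [trace_sub, trace_unitaryDiag, trace_unitaryDiag, trace_unitaryDiag] at htrace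
    rw [Finset.sum_sub_distrib]
    exact_mod_cast htrace
  rw [hη, posSemidef_unitaryDiag_iff] at hpos
  rw [hη, det_unitaryDiag, RCLike.ofReal_le_ofReal]
  exact prod_le_prod_of_sum_max_sub_le hpos hsum (sum_max_sub_le_of_unitaryDiag_eq_add ha hb heq)

theorem det_one_sub_unitaryDiag_mul_inv_le {U V : unitaryGroup n 𝕜} {a b : n → ℝ}
    (hab : Monovary a b) (ha : ∀ i, 0 < a i) (h : unitaryDiag V b ≤ unitaryDiag U a) :
    (1 - unitaryDiag V b * (unitaryDiag U a)⁻¹).det ≤ ((∏ i, (1 - b i / a i) : ℝ) : 𝕜) := by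
  have hprod : 0 < ∏ i, a i := Finset.prod_pos fun i _ => ha i
  have hunit : IsUnit (unitaryDiag U a).det := by
    rw [det_unitaryDiag, isUnit_iff_ne_zero, RCLike.ofReal_ne_zero]
    exact hprod.ne'
  have hquot : ∏ i, (1 - b i / a i) = (∏ i, (a i - b i)) * (∏ i, a i)⁻¹ := by
    rw [← div_eq_mul_inv, ← Finset.prod_div_distrib]
    exact Finset.prod_congr rfl fun i _ => by rw [sub_div, div_self (ha i).ne']
  rw [det_one_sub_mul_inv _ hunit, Ring.inverse_eq_inv', det_unitaryDiag, hquot,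
    RCLike.ofReal_mul, RCLike.ofReal_inv]
  refine mul_le_mul_of_nonneg_right (det_unitaryDiag_sub_unitaryDiag_le hab h) ?_
  rw [← RCLike.ofReal_inv]
  exact RCLike.ofReal_nonneg.2 (inv_nonneg.2 hprod.le)

theorem one_add_diagonal_eq_unitaryDiag (x : n → ℝ) :
    1 + diagonal (fun i => (x i : 𝕜)) = unitaryDiag 1 (fun i => 1 + x i) := by
  simp [unitaryDiag_one, ← diagonal_one, diagonal_add]

theorem posSemidef_one_add_diagonal_sub {lam alpha : n → ℝ} {Q : Matrix n n 𝕜}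
    (hQ : Q ∈ unitaryGroup n 𝕜) (h : ∀ i j, alpha i ≤ 1 + lam j) :
    (1 + diagonal (fun i => (lam i : 𝕜)) -
      Q * diagonal (fun i => (alpha i : 𝕜)) * Qᴴ).PosSemidef := by
  have hle : unitaryDiag ⟨Q, hQ⟩ alpha ≤ unitaryDiag 1 (fun i => 1 + lam i) :=
    unitaryDiag_le_unitaryDiag_of_forall_le h
  rwa [unitaryDiag_eq_mul, ← one_add_diagonal_eq_unitaryDiag, le_iff] at hle

end UnitaryDiag

theorem stmt_2_general {𝕜 n : Type*} [RCLike 𝕜] [Fintype n] [DecidableEq n] {lam alpha : n → ℝ}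
    (hmono : Monovary lam alpha) (hlam : ∀ i, 0 < 1 + lam i)
    {Q : Matrix n n 𝕜} (hQ : Q ∈ unitaryGroup n 𝕜)
    (hpos : (1 + diagonal (fun i => (lam i : 𝕜)) -
      Q * diagonal (fun i => (alpha i : 𝕜)) * Qᴴ).PosSemidef) :
    det (1 + diagonal (fun i => (lam i : 𝕜)) - Q * diagonal (fun i => (alpha i : 𝕜)) * Qᴴ)
      ≤ ∏ i, ((1 + lam i - alpha i : ℝ) : 𝕜) ∧
    det (1 - Q * diagonal (fun i => (alpha i : 𝕜)) * Qᴴ *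
          (1 + diagonal (fun i => (lam i : 𝕜)))⁻¹)
      ≤ ∏ i, ((1 - alpha i / (1 + lam i) : ℝ) : 𝕜) := by
  have hlam_eq := one_add_diagonal_eq_unitaryDiag (𝕜 := 𝕜) lam
  have halpha_eq : Q * diagonal (fun i => (alpha i : 𝕜)) * Qᴴ = unitaryDiag ⟨Q, hQ⟩ alpha :=
    (unitaryDiag_eq_mul ⟨Q, hQ⟩ alpha).symm
  have hmono' : Monovary (fun i => 1 + lam i) alpha := fun i j hij =>
    add_le_add_right (hmono hij) 1
  rw [hlam_eq, halpha_eq] at hpos ⊢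
  rw [← RCLike.ofReal_prod, ← RCLike.ofReal_prod]
  exact ⟨det_unitaryDiag_sub_unitaryDiag_le hmono' hpos,
    det_one_sub_unitaryDiag_mul_inv_le hmono' hlam hpos⟩

theorem stmt_2 (s : ℕ) (lam alpha : Fin s → ℝ)
    (hlam_mono : Antitone lam) (hlam_nonneg : ∀ i, 0 ≤ lam i)
    (halpha_mono : Antitone alpha) (halpha_nonneg : ∀ i, 0 ≤ alpha i)
    (halpha_le_one : ∀ i, alpha i ≤ 1)
    (Q : Matrix (Fin s) (Fin s) ℂ) (hQ : Q ∈ Matrix.unitaryGroup (Fin s) ℂ) :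
    det (1 + diagonal (fun i => (lam i : ℂ)) - Q * diagonal (fun i => (alpha i : ℂ)) * Qᴴ)
      ≤ ∏ i, ((1 + lam i - alpha i : ℝ) : ℂ) ∧
    det (1 - Q * diagonal (fun i => (alpha i : ℂ)) * Qᴴ *
          (1 + diagonal (fun i => (lam i : ℂ)))⁻¹)
      ≤ ∏ i, ((1 - alpha i / (1 + lam i) : ℝ) : ℂ) := by
  refine stmt_2_general (hlam_mono.monovary halpha_mono) (fun i => ?_) hQ
    (posSemidef_one_add_diagonal_sub hQ fun i j => ?_)
  · linarith [hlam_nonneg i]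
  · linarith [halpha_le_one i, hlam_nonneg j]
end

section
/- Let A be a Hermitian positive semidefinite s×s complex matrix whose eigenvalues α₁ ≥ α₂ ≥ … ≥ α_s (in nonincreasing order) satisfy α₁ ≤ 1, let B be a Hermitian positive semidefinite u×u complex matrix, and let X be any u×s complex matrix with λ₁ ≥ λ₂ ≥ … ≥ λ_s the eigenvalues of Xᴴ B X in nonincreasing order. Then det[I_s − A (I_s + Xᴴ B X)⁻¹] ≤ ∏_{i=1}^{s} (1 − α_i/(1+λ_i)). -/
open Matrix ComplexOrder

/-!
With `D = 1 + Xᴴ * B * X`, the left side is `det (D - A) / det D`, so the claim is an instance of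
Fiedler's inequality `det (D - A) ≤ ∏ i, (δ i - α i)` for Hermitian `A ≤ D` with decreasingly
ordered eigenvalues `α` and `δ`. Write `μ` for the eigenvalues of `D - A`, and let `Q` be `D - A`
with its eigenvalues truncated at a height `c`. By Weyl monotonicity the eigenvalues of `D - Q`
dominate both `α` and `δ - c`, and taking the trace of `Q = D - (D - Q)` gives
`∑ i, min (μ i) c ≤ ∑ i, min (δ i - α i) c`. The logarithm is a positive mixture of the functions
`x ↦ min x c`, hence `∏ i, μ i ≤ ∏ i, (δ i - α i)`.
-/

section ProductMajorization

variable {ι : Type*} [Fintype ι] {μ t : ι → ℝ}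

theorem intervalIntegrable_min_div_add_sq {ε a b : ℝ} (hε : 0 < ε) (ha : 0 ≤ a) (hb : 0 ≤ b)
    (x : ℝ) :
    IntervalIntegrable (fun c ↦ min x c / (c + ε) ^ 2) MeasureTheory.volume a b := by
  refine (ContinuousOn.div (by fun_prop) (by fun_prop) fun c hc ↦ ?_).intervalIntegrable
  have : 0 ≤ c := (le_min ha hb).trans hc.1
  positivity

-- Concavity of the logarithm in integrated form: `log (x + ε)` is affine in `x` plus a
-- nonnegative combination of the truncations `min x c`.
theorem log_add_eq_integral_min {ε x R : ℝ} (hε : 0 < ε) (hx : 0 ≤ x) (hxR : x ≤ R) :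
    Real.log (x + ε) =
      Real.log ε + x / (R + ε) + ∫ c in (0 : ℝ)..R, min x c / (c + ε) ^ 2 := by
  have hxε : x + ε ≠ 0 := by positivity
  have hRε : R + ε ≠ 0 := by linarith
  have below : ∫ c in (0 : ℝ)..x, min x c / (c + ε) ^ 2 =
      (Real.log (x + ε) + ε / (x + ε)) - (Real.log (0 + ε) + ε / (0 + ε)) := by
    refine intervalIntegral.integral_eq_sub_of_hasDerivAt
      (f := fun c ↦ Real.log (c + ε) + ε / (c + ε)) (fun c hc ↦ ?_)
      (intervalIntegrable_min_div_add_sq hε le_rfl hx x)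
    rw [Set.uIcc_of_le hx] at hc
    have hcε : c + ε ≠ 0 := by linarith [hc.1]
    have hid := (hasDerivAt_id' c).add_const ε
    refine ((hid.log hcε).add ((hasDerivAt_const c ε).div hid hcε)).congr_deriv ?_
    rw [min_eq_right hc.2]
    field_simp
    ring
  have above : ∫ c in x..R, min x c / (c + ε) ^ 2 = -x / (R + ε) - -x / (x + ε) := by
    refine intervalIntegral.integral_eq_sub_of_hasDerivAt (f := fun c ↦ -x / (c + ε))
      (fun c hc ↦ ?_) (intervalIntegrable_min_div_add_sq hε hx (hx.trans hxR) x)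
    rw [Set.uIcc_of_le hxR] at hc
    have hcε : c + ε ≠ 0 := by linarith [hc.1]
    refine ((hasDerivAt_const c (-x)).div ((hasDerivAt_id' c).add_const ε) hcε).congr_deriv ?_
    rw [min_eq_left hc.1]
    ring
  rw [← intervalIntegral.integral_add_adjacent_intervals
    (intervalIntegrable_min_div_add_sq hε le_rfl hx x)
    (intervalIntegrable_min_div_add_sq hε hx (hx.trans hxR) x), below, above, zero_add,
    div_self hε.ne']
  field_simp
  ring

theorem sum_log_add_eq_integral_sum_min {f : ι → ℝ} {ε R : ℝ} (hε : 0 < ε) (hR : 0 ≤ R)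
    (hf : ∀ i, 0 ≤ f i) (hfR : ∀ i, f i ≤ R) :
    ∑ i, Real.log (f i + ε) = Fintype.card ι * Real.log ε + (∑ i, f i) / (R + ε) +
      ∫ c in (0 : ℝ)..R, (∑ i, min (f i) c) / (c + ε) ^ 2 := by
  simp only [fun i ↦ log_add_eq_integral_min hε (hf i) (hfR i), Finset.sum_add_distrib,
    Finset.sum_div, Finset.sum_const, Finset.card_univ, nsmul_eq_mul]
  rw [intervalIntegral.integral_finsetSum fun i _ ↦
    intervalIntegrable_min_div_add_sq hε le_rfl hR (f i)]

theorem sum_log_add_le_sum_log_add_of_sum_min_le {ε : ℝ} (hε : 0 < ε) (hμ : ∀ i, 0 ≤ μ i)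
    (ht : ∀ i, 0 ≤ t i) (h : ∀ c, ∑ i, min (μ i) c ≤ ∑ i, min (t i) c) :
    ∑ i, Real.log (μ i + ε) ≤ ∑ i, Real.log (t i + ε) := by
  obtain ⟨R, hR, hμR, htR⟩ : ∃ R, 0 ≤ R ∧ (∀ i, μ i ≤ R) ∧ ∀ i, t i ≤ R := by
    have hμ_sum := Finset.sum_nonneg fun i (_ : i ∈ Finset.univ) ↦ hμ i
    have ht_sum := Finset.sum_nonneg fun i (_ : i ∈ Finset.univ) ↦ ht i
    refine ⟨∑ i, μ i + ∑ i, t i, by positivity, fun i ↦ ?_, fun i ↦ ?_⟩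
    · linarith [Finset.single_le_sum (fun j _ ↦ hμ j) (Finset.mem_univ i)]
    · linarith [Finset.single_le_sum (fun j _ ↦ ht j) (Finset.mem_univ i)]
  have hsum : ∑ i, μ i ≤ ∑ i, t i := by
    simpa only [min_eq_left (hμR _), min_eq_left (htR _)] using h R
  have hint (f : ι → ℝ) : IntervalIntegrable (fun c ↦ (∑ i, min (f i) c) / (c + ε) ^ 2)
      MeasureTheory.volume 0 R := by
    simpa only [Finset.sum_div, Finset.sum_fn] using IntervalIntegrable.sum Finset.univ
      fun i _ ↦ intervalIntegrable_min_div_add_sq hε le_rfl hR (f i)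
  rw [sum_log_add_eq_integral_sum_min hε hR hμ hμR, sum_log_add_eq_integral_sum_min hε hR ht htR]
  gcongr
  exact intervalIntegral.integral_mono_on hR (hint μ) (hint t) fun c _ ↦
    div_le_div_of_nonneg_right (h c) (sq_nonneg _)

theorem prod_le_prod_of_sum_min_le (hμ : ∀ i, 0 ≤ μ i) (ht : ∀ i, 0 ≤ t i)
    (h : ∀ c, ∑ i, min (μ i) c ≤ ∑ i, min (t i) c) : ∏ i, μ i ≤ ∏ i, t i := by
  have prod_add_le (ε : ℝ) (hε : 0 < ε) : ∏ i, (μ i + ε) ≤ ∏ i, (t i + ε) := by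
    have hμε (i) : 0 < μ i + ε := add_pos_of_nonneg_of_pos (hμ i) hε
    have htε (i) : 0 < t i + ε := add_pos_of_nonneg_of_pos (ht i) hε
    rw [← Real.log_le_log_iff (Finset.prod_pos fun i _ ↦ hμε i) (Finset.prod_pos fun i _ ↦ htε i),
      Real.log_prod fun i _ ↦ (hμε i).ne', Real.log_prod fun i _ ↦ (htε i).ne']
    exact sum_log_add_le_sum_log_add_of_sum_min_le hε hμ ht h
  have tendsto_prod_add (f : ι → ℝ) :
      Filter.Tendsto (fun ε ↦ ∏ i, (f i + ε)) (nhdsWithin 0 (Set.Ioi 0)) (nhds (∏ i, f i)) := by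
    have hcont : Continuous fun ε ↦ ∏ i, (f i + ε) := by fun_prop
    simpa only [add_zero] using (hcont.tendsto 0).mono_left nhdsWithin_le_nhds
  exact le_of_tendsto_of_tendsto (tendsto_prod_add μ) (tendsto_prod_add t)
    (eventually_nhdsWithin_of_forall prod_add_le)

end ProductMajorization

section SymmetricOperators

open scoped InnerProductSpace

variable {𝕜 E : Type*} [RCLike 𝕜] [NormedAddCommGroup E] [InnerProductSpace 𝕜 E]
  [FiniteDimensional 𝕜 E]

theorem exists_ne_zero_forall_inner_eq_zero {ι : Type*} [Fintype ι] (f : ι → E)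
    (h : Fintype.card ι < Module.finrank 𝕜 E) : ∃ v : E, v ≠ 0 ∧ ∀ j, ⟪f j, v⟫_𝕜 = 0 := by
  have hker : LinearMap.ker (LinearMap.pi fun j ↦ (innerₛₗ 𝕜 (f j) : E →ₗ[𝕜] 𝕜)) ≠ ⊥ :=
    LinearMap.ker_ne_bot_of_finrank_lt (by rwa [Module.finrank_fintype_fun_eq_card])
  obtain ⟨v, hv, hv0⟩ := (Submodule.ne_bot_iff _).1 hker
  exact ⟨v, hv0, fun j ↦ congrFun hv j⟩

variable {n : ℕ} {S T : E →ₗ[𝕜] E} (hn : Module.finrank 𝕜 E = n)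

theorem re_inner_self_apply_eq_sum_eigenvalues (hT : T.IsSymmetric) (v : E) :
    RCLike.re ⟪v, T v⟫_𝕜 =
      ∑ j, hT.eigenvalues hn j * ‖⟪hT.eigenvectorBasis hn j, v⟫_𝕜‖ ^ 2 := by
  rw [← (hT.eigenvectorBasis hn).sum_inner_mul_inner, map_sum]
  refine Finset.sum_congr rfl fun j _ ↦ ?_
  rw [← hT, hT.apply_eigenvectorBasis, inner_smul_left, RCLike.conj_ofReal, mul_left_comm,
    RCLike.re_ofReal_mul, inner_mul_symm_re_eq_norm, norm_mul, norm_inner_symm, sq]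

theorem eigenvalues_mul_norm_sq_le_re_inner (hT : T.IsSymmetric) {i : Fin n} {v : E}
    (hv : ∀ j, i < j → ⟪hT.eigenvectorBasis hn j, v⟫_𝕜 = 0) :
    hT.eigenvalues hn i * ‖v‖ ^ 2 ≤ RCLike.re ⟪v, T v⟫_𝕜 := by
  rw [re_inner_self_apply_eq_sum_eigenvalues hn hT,
    ← (hT.eigenvectorBasis hn).sum_sq_norm_inner_right, Finset.mul_sum]
  refine Finset.sum_le_sum fun j _ ↦ ?_
  obtain hji | hij := le_or_gt j i
  · gcongr
    exact hT.eigenvalues_antitone hn hji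
  · simp [hv j hij]

theorem re_inner_le_eigenvalues_mul_norm_sq (hT : T.IsSymmetric) {i : Fin n} {v : E}
    (hv : ∀ j, j < i → ⟪hT.eigenvectorBasis hn j, v⟫_𝕜 = 0) :
    RCLike.re ⟪v, T v⟫_𝕜 ≤ hT.eigenvalues hn i * ‖v‖ ^ 2 := by
  rw [re_inner_self_apply_eq_sum_eigenvalues hn hT,
    ← (hT.eigenvectorBasis hn).sum_sq_norm_inner_right, Finset.mul_sum]
  refine Finset.sum_le_sum fun j _ ↦ ?_
  obtain hij | hji := le_or_gt i j
  · gcongr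
    exact hT.eigenvalues_antitone hn hij
  · simp [hv j hji]

theorem eigenvalues_le_eigenvalues_add (hS : S.IsSymmetric) (hT : T.IsSymmetric) {c : ℝ}
    (h : ∀ v, RCLike.re ⟪v, S v⟫_𝕜 ≤ RCLike.re ⟪v, T v⟫_𝕜 + c * ‖v‖ ^ 2) (i : Fin n) :
    hS.eigenvalues hn i ≤ hT.eigenvalues hn i + c := by
  obtain ⟨v, hv0, hv⟩ := exists_ne_zero_forall_inner_eq_zero (𝕜 := 𝕜) (ι := {j // j ≠ i})
    (fun j ↦ if j.1 < i then hT.eigenvectorBasis hn j else hS.eigenvectorBasis hn j)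
    ((Fintype.card_subtype_lt (x := i) (by simp)).trans_eq (by rw [Fintype.card_fin, hn]))
  have hSv (j) (hj : i < j) : ⟪hS.eigenvectorBasis hn j, v⟫_𝕜 = 0 := by
    simpa only [if_neg hj.not_gt] using hv ⟨j, hj.ne'⟩
  have hTv (j) (hj : j < i) : ⟪hT.eigenvectorBasis hn j, v⟫_𝕜 = 0 := by
    simpa only [if_pos hj] using hv ⟨j, hj.ne⟩
  have hrayleigh : hS.eigenvalues hn i * ‖v‖ ^ 2 ≤ (hT.eigenvalues hn i + c) * ‖v‖ ^ 2 := by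
    linarith [eigenvalues_mul_norm_sq_le_re_inner hn hS hSv,
      re_inner_le_eigenvalues_mul_norm_sq hn hT hTv, h v]
  exact le_of_mul_le_mul_right hrayleigh (by positivity)

end SymmetricOperators

section HermitianMatrices

open scoped MatrixOrder

variable {𝕜 n : Type*} [RCLike 𝕜] [Fintype n] [DecidableEq n] {A B D M : Matrix n n 𝕜}

theorem re_inner_toEuclideanLin_smul_one (c : ℝ) (v : EuclideanSpace 𝕜 n) :
    RCLike.re (inner 𝕜 v (toEuclideanLin (c • (1 : Matrix n n 𝕜)) v)) = c * ‖v‖ ^ 2 := by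
  have hone : toEuclideanLin (1 : Matrix n n 𝕜) v = v := by simp
  rw [RCLike.real_smul_eq_coe_smul (K := 𝕜), map_smul, LinearMap.smul_apply, hone,
    inner_smul_right, RCLike.re_ofReal_mul, inner_self_eq_norm_sq]

theorem eigenvalues₀_le_eigenvalues₀_add (hA : A.IsHermitian) (hB : B.IsHermitian) {c : ℝ}
    (h : A ≤ B + c • 1) (i : Fin (Fintype.card n)) :
    hA.eigenvalues₀ i ≤ hB.eigenvalues₀ i + c := by
  refine eigenvalues_le_eigenvalues_add _ _ _ (fun v ↦ ?_) i
  have hpos := (isPositive_toEuclideanLin_iff.2 h).re_inner_nonneg_right v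
  simp only [map_sub, map_add, LinearMap.sub_apply, LinearMap.add_apply, inner_sub_right,
    inner_add_right, re_inner_toEuclideanLin_smul_one] at hpos
  linarith

theorem eigenvalues₀_le_eigenvalues₀ (hA : A.IsHermitian) (hB : B.IsHermitian) (h : A ≤ B)
    (i : Fin (Fintype.card n)) : hA.eigenvalues₀ i ≤ hB.eigenvalues₀ i := by
  simpa using eigenvalues₀_le_eigenvalues₀_add hA hB (c := 0) (by simpa using h) i

theorem eigenvalues₀_one_add (hM : M.IsHermitian) (hM' : (1 + M).IsHermitian)
    (i : Fin (Fintype.card n)) : hM'.eigenvalues₀ i = 1 + hM.eigenvalues₀ i := by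
  have hle := eigenvalues₀_le_eigenvalues₀_add hM' hM (c := 1) (by simp [add_comm]) i
  have hge := eigenvalues₀_le_eigenvalues₀_add hM hM' (c := -1) (by simp) i
  linarith

theorem sum_comp_eigenvalues (hA : A.IsHermitian) (f : ℝ → ℝ) :
    ∑ i, f (hA.eigenvalues i) = ∑ i, f (hA.eigenvalues₀ i) :=
  Equiv.sum_comp (Fintype.equivOfCardEq (Fintype.card_fin _)).symm fun i ↦ f (hA.eigenvalues₀ i)

theorem det_eq_prod_eigenvalues₀ (hA : A.IsHermitian) :
    A.det = ((∏ i, hA.eigenvalues₀ i : ℝ) : 𝕜) := by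
  rw [hA.det_eq_prod_eigenvalues, ← RCLike.ofReal_prod]
  congr 1
  exact Equiv.prod_comp (Fintype.equivOfCardEq (Fintype.card_fin _)).symm hA.eigenvalues₀

theorem trace_cfc (hA : A.IsHermitian) (f : ℝ → ℝ) :
    (cfc f A).trace = ((∑ i, f (hA.eigenvalues₀ i) : ℝ) : 𝕜) := by
  rw [hA.cfc_eq, IsHermitian.cfc, Unitary.conjStarAlgAut_apply, trace_mul_cycle,
    Unitary.coe_star_mul_self, one_mul, trace_diagonal, ← sum_comp_eigenvalues]
  simp

theorem trace_eq_sum_eigenvalues₀ (hA : A.IsHermitian) :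
    A.trace = ((∑ i, hA.eigenvalues₀ i : ℝ) : 𝕜) := by
  simpa only [cfc_id ℝ A hA.isSelfAdjoint, id] using trace_cfc hA id

theorem sum_min_eigenvalues₀_sub_le (hA : A.IsHermitian) (hD : D.IsHermitian) (c : ℝ) :
    ∑ i, min ((hD.sub hA).eigenvalues₀ i) c ≤
      ∑ i, min (hD.eigenvalues₀ i - hA.eigenvalues₀ i) c := by
  let Q : Matrix n n 𝕜 := cfc (min · c) (D - A)
  have hQ_le_sub : Q ≤ D - A :=
    (cfc_mono fun x _ ↦ min_le_left x c).trans_eq (cfc_id' ℝ (D - A) (hD.sub hA).isSelfAdjoint)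
  have hQ_le_smul : Q ≤ c • 1 := by
    rw [← Algebra.algebraMap_eq_smul_one]
    exact cfc_le_algebraMap _ _ _ fun x _ ↦ min_le_right x c
  have hQ_herm : Q.IsHermitian := cfc_predicate _ _
  have hDQ := hD.sub hQ_herm
  have htrace : ∑ i, hDQ.eigenvalues₀ i =
      ∑ i, hD.eigenvalues₀ i - ∑ i, min ((hD.sub hA).eigenvalues₀ i) c := by
    have h := trace_sub D Q
    rw [trace_eq_sum_eigenvalues₀ hDQ, trace_eq_sum_eigenvalues₀ hD,
      trace_cfc (hD.sub hA)] at h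
    exact_mod_cast h
  have hA_le (i) : hA.eigenvalues₀ i ≤ hDQ.eigenvalues₀ i :=
    eigenvalues₀_le_eigenvalues₀ hA hDQ (le_sub_comm.1 hQ_le_sub) i
  have hD_le (i) : hD.eigenvalues₀ i ≤ hDQ.eigenvalues₀ i + c :=
    eigenvalues₀_le_eigenvalues₀_add hD hDQ
      (by rw [sub_add_eq_add_sub, le_sub_iff_add_le]; gcongr) i
  calc ∑ i, min ((hD.sub hA).eigenvalues₀ i) c
      = ∑ i, (hD.eigenvalues₀ i - hDQ.eigenvalues₀ i) := by
        rw [Finset.sum_sub_distrib, htrace, sub_sub_cancel]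
    _ ≤ ∑ i, min (hD.eigenvalues₀ i - hA.eigenvalues₀ i) c :=
        Finset.sum_le_sum fun i _ ↦
          le_min (sub_le_sub_left (hA_le i) _) (sub_le_iff_le_add'.2 (hD_le i))

theorem eigenvalues₀_nonneg_of_posSemidef (hA : A.PosSemidef) (i : Fin (Fintype.card n)) :
    0 ≤ hA.1.eigenvalues₀ i := by
  simpa [IsHermitian.eigenvalues] using
    hA.eigenvalues_nonneg (Fintype.equivOfCardEq (Fintype.card_fin _) i)

theorem eigenvalues₀_pos_of_posDef (hA : A.PosDef) (i : Fin (Fintype.card n)) :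
    0 < hA.1.eigenvalues₀ i := by
  simpa [IsHermitian.eigenvalues] using
    hA.eigenvalues_pos (Fintype.equivOfCardEq (Fintype.card_fin _) i)

theorem det_sub_le_prod_eigenvalues₀_sub (hA : A.IsHermitian) (hD : D.IsHermitian) (h : A ≤ D) :
    (D - A).det ≤ ((∏ i, (hD.eigenvalues₀ i - hA.eigenvalues₀ i) : ℝ) : 𝕜) := by
  rw [det_eq_prod_eigenvalues₀ (hD.sub hA), RCLike.ofReal_le_ofReal]
  exact prod_le_prod_of_sum_min_le (eigenvalues₀_nonneg_of_posSemidef h)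
    (fun i ↦ sub_nonneg.2 (eigenvalues₀_le_eigenvalues₀ hA hD h i))
    (sum_min_eigenvalues₀_sub_le hA hD)

theorem det_one_sub_mul_inv_le_prod_one_sub_div (hA : A.IsHermitian) (hD : D.PosDef) (h : A ≤ D) :
    (1 - A * D⁻¹).det ≤ ((∏ i, (1 - hA.eigenvalues₀ i / hD.1.eigenvalues₀ i) : ℝ) : 𝕜) := by
  have hfactor : 1 - A * D⁻¹ = (D - A) * D⁻¹ := by
    rw [sub_mul, mul_nonsing_inv _ ((isUnit_iff_isUnit_det D).1 hD.isUnit)]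
  have hprod : ∏ i, (1 - hA.eigenvalues₀ i / hD.1.eigenvalues₀ i) =
      (∏ i, (hD.1.eigenvalues₀ i - hA.eigenvalues₀ i)) * (∏ i, hD.1.eigenvalues₀ i)⁻¹ := by
    rw [← div_eq_mul_inv, ← Finset.prod_div_distrib]
    exact Finset.prod_congr rfl fun i _ ↦ one_sub_div (eigenvalues₀_pos_of_posDef hD i).ne'
  rw [hfactor, det_mul, det_nonsing_inv, Ring.inverse_eq_inv', hprod, RCLike.ofReal_mul,
    RCLike.ofReal_inv, ← det_eq_prod_eigenvalues₀ hD.1]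
  exact mul_le_mul_of_nonneg_right (det_sub_le_prod_eigenvalues₀_sub hA hD.1 h)
    (inv_nonneg.2 hD.posSemidef.det_nonneg)

theorem le_one_of_eigenvalues_le_one (hA : A.IsHermitian) (h : ∀ i, hA.eigenvalues i ≤ 1) :
    A ≤ 1 := by
  refine CFC.le_one (R := ℝ) (fun x hx ↦ ?_) hA.isSelfAdjoint
  rw [hA.spectrum_real_eq_range_eigenvalues] at hx
  obtain ⟨i, rfl⟩ := hx
  exact h i

end HermitianMatrices

section OrderedEigenvalues

open scoped MatrixOrder

variable {𝕜 n : Type*} [RCLike 𝕜] [Fintype n] [LinearOrder n] {A M : Matrix n n 𝕜}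

theorem eigenvalues_comp_perm_eq_eigenvalues₀_of_antitone (hA : A.IsHermitian) {σ : Equiv.Perm n}
    (h : Antitone (hA.eigenvalues ∘ σ)) (i : Fin (Fintype.card n)) :
    hA.eigenvalues (σ (Fintype.orderIsoFinOfCardEq n rfl i)) = hA.eigenvalues₀ i := by
  let e := Fintype.orderIsoFinOfCardEq n rfl
  have := Tuple.unique_antitone (f := hA.eigenvalues₀) (σ := 1)
    (τ := (e.toEquiv.trans σ).trans
      (Fintype.equivOfCardEq (Fintype.card_fin _)).symm) hA.eigenvalues₀_antitone
      (h.comp_monotone e.monotone)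
  exact (congrFun this i).symm

theorem stmt_3_general (hA : A.IsHermitian) (hM : M.PosSemidef)
    {alpha lam : n → ℝ} (halpha_mono : Antitone alpha)
    (halpha_eig : ∃ σ : Equiv.Perm n, alpha = hA.eigenvalues ∘ σ)
    (halpha_le_one : ∀ i, alpha i ≤ 1) (hlam_mono : Antitone lam)
    (hlam_eig : ∃ σ : Equiv.Perm n, lam = hM.1.eigenvalues ∘ σ) :
    det (1 - A * (1 + M)⁻¹) ≤ ∏ i, ((1 - alpha i / (1 + lam i) : ℝ) : 𝕜) := by
  obtain ⟨σ, rfl⟩ := halpha_eig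
  obtain ⟨τ, rfl⟩ := hlam_eig
  have hD : (1 + M).PosDef := PosDef.one.add_posSemidef hM
  have hAD : A ≤ 1 + M :=
    (le_one_of_eigenvalues_le_one hA fun i ↦ by simpa using halpha_le_one (σ.symm i)).trans
      (le_add_of_nonneg_right hM.nonneg)
  refine (det_one_sub_mul_inv_le_prod_one_sub_div hA hD hAD).trans_eq ?_
  rw [← RCLike.ofReal_prod, ← (Fintype.orderIsoFinOfCardEq n rfl).toEquiv.prod_comp]
  congr! 4 with i
  · exact (eigenvalues_comp_perm_eq_eigenvalues₀_of_antitone hA halpha_mono i).symm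
  · rw [eigenvalues₀_one_add hM.1]
    congr 1
    exact (eigenvalues_comp_perm_eq_eigenvalues₀_of_antitone hM.1 hlam_mono i).symm

end OrderedEigenvalues

theorem stmt_3 (s u : ℕ)
    (A : Matrix (Fin s) (Fin s) ℂ) (hA : A.PosSemidef)
    (B : Matrix (Fin u) (Fin u) ℂ) (hB : B.PosSemidef)
    (X : Matrix (Fin u) (Fin s) ℂ) (hM : (Xᴴ * B * X).IsHermitian)
    (alpha : Fin s → ℝ) (halpha_mono : Antitone alpha)
    (halpha_eig : ∃ σ : Equiv.Perm (Fin s), alpha = hA.1.eigenvalues ∘ σ)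
    (halpha_le_one : ∀ i, alpha i ≤ 1)
    (lam : Fin s → ℝ) (hlam_mono : Antitone lam)
    (hlam_eig : ∃ σ : Equiv.Perm (Fin s), lam = hM.eigenvalues ∘ σ) :
    det (1 - A * (1 + Xᴴ * B * X)⁻¹) ≤ ∏ i, ((1 - alpha i / (1 + lam i) : ℝ) : ℂ) := by
  exact stmt_3_general hA.1 (hB.conjTranspose_mul_mul_same X) halpha_mono halpha_eig halpha_le_one
    hlam_mono hlam_eig
end

section
/- Let H₁ ∈ ℂ^{s×t}, H₂ ∈ ℂ^{r×u} be complex matrices, let c > 0 and P₂ > 0 be real numbers, and define the set S = {X ∈ ℂ^{u×s} : tr[X (I_s + c H₁ H₁ᴴ) Xᴴ] ≤ P₂} and the objective T(X) = tr[H₁ H₁ᴴ (I_s + Xᴴ H₂ᴴ H₂ X)⁻¹]. Let ρ be the minimum of s and the rank of H₂. Then there exists X* ∈ S minimizing T over S (i.e., T(X*) ≤ T(X) for all X ∈ S) of the form X* = Σ_{i=1}^{ρ} √(x_i/μ_i) v_i w_iᴴ, where x₁ ≥ … ≥ x_ρ ≥ 0 are real, v₁,…,v_ρ ∈ ℂ^u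 are orthonormal eigenvectors of H₂ᴴ H₂ whose eigenvalues μ₁ ≥ … ≥ μ_ρ > 0 are its ρ largest eigenvalues in nonincreasing order, and w₁,…,w_ρ ∈ ℂ^s are orthonormal eigenvectors of H₁ H₁ᴴ whose eigenvalues are its ρ largest eigenvalues in nonincreasing order. -/
open Matrix ComplexOrder

/-!
Write `A = H₁ * H₁ᴴ`, `M = 1 + c • A` and `G = (1 + Xᴴ * H₂ᴴ * H₂ * X)⁻¹`. After a unitary change of
variables in `X` the matrix `A` is diagonal. Put `Y = √A * G * (H₂ * X)ᴴ`, `E = H₂ * X * √M` and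
`N = Y * E`. Since `√A - N * (√M)⁻¹ = √A * G`, the objective splits as
`tr (A * G) = ‖√A - N * (√M)⁻¹‖² + ‖Y‖²` in Frobenius norms. Rearrangement inequalities (Birkhoff's
theorem applied to the squared moduli of the entries of a unitary matrix) bound the two terms below
by the singular values `νᵢ` of `N` and `eᵢ` of `E`, and minimizing over the `νᵢ` gives
`∑ aᵢ / (1 + yᵢ)` with `yᵢ = eᵢ² / mᵢ`. In the same way the power is at least `∑ mᵢ * yᵢ / τᵢ²`,
where the `τᵢ` are the singular values of `H₂`. Both bounds are attained by the `X` that pairs the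
leading eigenvectors of the two Gram matrices. What remains is a convex scalar problem, solved by
water-filling; its solution is nonincreasing because `a ↦ a / (1 + c * a)` is monotone.
-/

section TraceInequalities

variable {n 𝕜 : Type*} [Fintype n] [DecidableEq n] [RCLike 𝕜]

theorem sum_mul_le_sum_sum_of_mem_doublyStochastic {R : Type*} [Field R] [LinearOrder R]
    [IsStrictOrderedRing R] {D : Matrix n n R} (hD : D ∈ doublyStochastic R n) {f g : n → R}
    (hfg : Antivary f g) : ∑ i, f i * g i ≤ ∑ i, ∑ j, D i j * (f i * g j) := by
  obtain ⟨w, hw0, hw1, rfl⟩ := exists_eq_sum_perm_of_mem_doublyStochastic hD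
  calc ∑ i, f i * g i
      = ∑ σ, w σ * ∑ i, f i * g i := by rw [← Finset.sum_mul, hw1, one_mul]
    _ ≤ ∑ σ, w σ * ∑ i, f i * g (σ i) := Finset.sum_le_sum fun σ _ =>
        mul_le_mul_of_nonneg_left hfg.sum_mul_le_sum_mul_comp_perm (hw0 σ)
    _ = ∑ i, ∑ σ, w σ * (f i * g (σ i)) := by
        simp only [Finset.mul_sum]
        exact Finset.sum_comm
    _ = _ := by
        refine Finset.sum_congr rfl fun i _ => ?_
        simp only [Matrix.sum_apply, Finset.sum_mul]
        rw [Finset.sum_comm]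
        simp [Equiv.Perm.permMatrix, PEquiv.toMatrix_apply, eq_comm]

theorem sum_sum_le_sum_mul_of_mem_doublyStochastic {R : Type*} [Field R] [LinearOrder R]
    [IsStrictOrderedRing R] {D : Matrix n n R} (hD : D ∈ doublyStochastic R n) {f g : n → R}
    (hfg : Monovary f g) : ∑ i, ∑ j, D i j * (f i * g j) ≤ ∑ i, f i * g i := by
  simpa using sum_mul_le_sum_sum_of_mem_doublyStochastic hD hfg.neg_left

theorem norm_sq_mem_doublyStochastic {U : Matrix n n 𝕜} (hU : U ∈ unitaryGroup n 𝕜) :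
    of (fun i j => ‖U i j‖ ^ 2) ∈ doublyStochastic ℝ n := by
  refine mem_doublyStochastic_iff_sum.2 ⟨fun i j => sq_nonneg _, fun i => ?_, fun j => ?_⟩
  · have row := congr_fun₂ (mem_unitaryGroup_iff.1 hU) i i
    simp only [mul_apply, star_apply, RCLike.star_def, RCLike.mul_conj, one_apply_eq] at row
    exact_mod_cast row
  · have col := congr_fun₂ (mem_unitaryGroup_iff'.1 hU) j j
    simp only [mul_apply, star_apply, RCLike.star_def, RCLike.conj_mul, one_apply_eq] at col
    exact_mod_cast col

theorem re_mul_diagonal_mul_conjTranspose_apply_self (U V : Matrix n n 𝕜) (d : n → ℝ) (i : n) :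
    RCLike.re ((U * diagonal (fun j => (d j : 𝕜)) * Vᴴ) i i) =
      ∑ j, d j * RCLike.re (U i j * star (V i j)) := by
  rw [mul_apply, map_sum]
  refine Finset.sum_congr rfl fun j _ => ?_
  rw [mul_diagonal, conjTranspose_apply, mul_right_comm, mul_comm, RCLike.re_ofReal_mul]

theorem sum_mul_le_sum_mul_re_diag {U : Matrix n n 𝕜} (hU : U ∈ unitaryGroup n 𝕜) {f d : n → ℝ}
    (hfd : Antivary f d) :
    ∑ i, f i * d i ≤
      ∑ i, f i * RCLike.re ((U * diagonal (fun j => (d j : 𝕜)) * Uᴴ) i i) := by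
  refine (sum_mul_le_sum_sum_of_mem_doublyStochastic (norm_sq_mem_doublyStochastic hU) hfd).trans_eq
    (Finset.sum_congr rfl fun i _ => ?_)
  rw [re_mul_diagonal_mul_conjTranspose_apply_self, Finset.mul_sum]
  refine Finset.sum_congr rfl fun j _ => ?_
  rw [of_apply, RCLike.star_def, RCLike.mul_conj, ← RCLike.ofReal_pow, RCLike.ofReal_re]
  ring

theorem sum_mul_re_diag_le_sum_mul {U V : Matrix n n 𝕜} (hU : U ∈ unitaryGroup n 𝕜)
    (hV : V ∈ unitaryGroup n 𝕜) {f d : n → ℝ} (hfd : Monovary f d) (hf : 0 ≤ f) (hd : 0 ≤ d) :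
    ∑ i, f i * RCLike.re ((U * diagonal (fun j => (d j : 𝕜)) * Vᴴ) i i) ≤ ∑ i, f i * d i := by
  have re_le (z w : 𝕜) : RCLike.re (z * star w) ≤ (‖z‖ ^ 2 + ‖w‖ ^ 2) / 2 := by
    have := RCLike.re_le_norm (z * star w)
    rw [norm_mul, norm_star] at this
    linarith [two_mul_le_add_sq ‖z‖ ‖w‖]
  calc ∑ i, f i * RCLike.re ((U * diagonal (fun j => (d j : 𝕜)) * Vᴴ) i i)
      ≤ ∑ i, ∑ j, f i * d j * ((‖U i j‖ ^ 2 + ‖V i j‖ ^ 2) / 2) := by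
        refine Finset.sum_le_sum fun i _ => ?_
        rw [re_mul_diagonal_mul_conjTranspose_apply_self, Finset.mul_sum]
        refine Finset.sum_le_sum fun j _ => ?_
        rw [← mul_assoc]
        exact mul_le_mul_of_nonneg_left (re_le _ _) (mul_nonneg (hf i) (hd j))
    _ = ((∑ i, ∑ j, of (fun i j => ‖U i j‖ ^ 2) i j * (f i * d j)) +
          ∑ i, ∑ j, of (fun i j => ‖V i j‖ ^ 2) i j * (f i * d j)) / 2 := by
        simp only [← Finset.sum_add_distrib, Finset.sum_div, of_apply]
        exact Finset.sum_congr rfl fun i _ => Finset.sum_congr rfl fun j _ => by ring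
    _ ≤ ∑ i, f i * d i := by
        have leU := sum_sum_le_sum_mul_of_mem_doublyStochastic (norm_sq_mem_doublyStochastic hU) hfd
        have leV := sum_sum_le_sum_mul_of_mem_doublyStochastic (norm_sq_mem_doublyStochastic hV) hfd
        linarith

end TraceInequalities

section UnitaryDiagonalization

variable {𝕜 : Type*} [RCLike 𝕜]

theorem roots_charpoly_of_eq_mul_diagonal {n : Type*} [Fintype n] [DecidableEq n]
    {A V : Matrix n n 𝕜} {d : n → 𝕜} (hV : V ∈ unitaryGroup n 𝕜) (hA : A = V * diagonal d * Vᴴ) :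
    A.charpoly.roots = Multiset.map d Finset.univ.val := by
  rw [hA, charpoly_mul_comm, ← mul_assoc, ← star_eq_conjTranspose, mem_unitaryGroup_iff'.1 hV,
    one_mul, charpoly_diagonal]
  have roots_eq := Polynomial.roots_multiset_prod_X_sub_C (Finset.univ.val.map d)
  rwa [Multiset.map_map] at roots_eq

theorem exists_perm_eq_eigenvalues_comp {n : ℕ} {A V : Matrix (Fin n) (Fin n) 𝕜} {d : Fin n → ℝ}
    (hA : A.IsHermitian) (hd : Antitone d) (hV : V ∈ unitaryGroup (Fin n) 𝕜)
    (hAV : A = V * diagonal (fun i => (d i : 𝕜)) * Vᴴ) :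
    ∃ σ : Equiv.Perm (Fin n), d = hA.eigenvalues ∘ σ := by
  have sorted_eq : List.ofFn d = List.ofFn hA.eigenvalues₀ := by
    rw [← hA.sort_roots_charpoly_eq_eigenvalues₀, roots_charpoly_of_eq_mul_diagonal hV hAV,
      Multiset.map_map, Fin.univ_val_map, Multiset.coe_sort, List.mergeSort_of_pairwise]
    · simp [Function.comp_def]
    · simpa [Function.comp_def] using hd.sortedGE_ofFn.pairwise
  refine ⟨(finCongr (Fintype.card_fin n).symm).trans
    (Fintype.equivOfCardEq (Fintype.card_fin _)), funext fun i => ?_⟩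
  have := List.getElem_of_eq sorted_eq (i := i) (by simp)
  simpa [IsHermitian.eigenvalues] using this

end UnitaryDiagonalization

section SingularValueDecomposition

open Module

variable {𝕜 E F : Type*} [RCLike 𝕜]
  [NormedAddCommGroup E] [InnerProductSpace 𝕜 E] [FiniteDimensional 𝕜 E]
  [NormedAddCommGroup F] [InnerProductSpace 𝕜 F] [FiniteDimensional 𝕜 F]

theorem inner_map_eigenvectorBasis (f : E →ₗ[𝕜] F) {n : ℕ} (hn : finrank 𝕜 E = n) (i j : Fin n) :
    inner 𝕜 (f (f.isSymmetric_adjoint_comp_self.eigenvectorBasis hn i))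
      (f (f.isSymmetric_adjoint_comp_self.eigenvectorBasis hn j)) =
      if i = j then (f.singularValues i : 𝕜) ^ 2 else 0 := by
  rw [← f.adjoint_inner_right, ← LinearMap.comp_apply, LinearMap.IsSymmetric.apply_eigenvectorBasis,
    inner_smul_right, OrthonormalBasis.inner_eq_ite, ← f.sq_singularValues_fin]
  split_ifs with h <;> simp [h]

theorem orthonormal_inv_singularValues_smul_map (f : E →ₗ[𝕜] F) {n : ℕ} (hn : finrank 𝕜 E = n) :
    Orthonormal 𝕜 fun i : {i : Fin n // f.singularValues i ≠ 0} =>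
      (f.singularValues i : 𝕜)⁻¹ • f (f.isSymmetric_adjoint_comp_self.eigenvectorBasis hn i) := by
  rw [orthonormal_iff_ite]
  rintro ⟨i, hi⟩ ⟨j, hj⟩
  rw [inner_smul_left, inner_smul_right, inner_map_eigenvectorBasis]
  by_cases hij : i = j
  · subst hij
    have : (f.singularValues i : 𝕜) ≠ 0 := RCLike.ofReal_ne_zero.2 hi
    simp only [map_inv₀, RCLike.conj_ofReal, if_true]
    field_simp
  · simp [hij]

theorem exists_orthonormalBasis_inner_map_eq_singularValues (f : E →ₗ[𝕜] F) {m n : ℕ}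
    (hm : finrank 𝕜 F = m) (hn : finrank 𝕜 E = n) :
    ∃ (u : OrthonormalBasis (Fin m) 𝕜 F) (v : OrthonormalBasis (Fin n) 𝕜 E),
      ∀ i j, inner 𝕜 (u i) (f (v j)) = if (i : ℕ) = j then (f.singularValues i : 𝕜) else 0 := by
  set v := f.isSymmetric_adjoint_comp_self.eigenvectorBasis hn
  have lt_of_ne {i : ℕ} (hi : f.singularValues i ≠ 0) : i < m ∧ i < n := by
    have hr : i < finrank 𝕜 f.range :=
      f.singularValues_pos_iff_lt_finrank_range.1 ((f.singularValues_nonneg i).lt_of_ne' hi)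
    exact ⟨hm ▸ hr.trans_le (Submodule.finrank_le _), hn ▸ hr.trans_le f.finrank_range_le⟩
  let w : Fin m → F := fun i =>
    if h : (i : ℕ) < n then (f.singularValues i : 𝕜)⁻¹ • f (v ⟨i, h⟩) else 0
  have hw : Orthonormal 𝕜 (({i : Fin m | f.singularValues i ≠ 0} : Set (Fin m)).domRestrict w) := by
    convert (orthonormal_inv_singularValues_smul_map f hn).comp
      (fun i : {i : Fin m | f.singularValues i ≠ 0} => ⟨⟨i, (lt_of_ne i.2).2⟩, i.2⟩)
      fun i j hij => by simpa [Subtype.ext_iff, Fin.ext_iff] using hij using 2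
    exact funext fun i => dif_pos (lt_of_ne i.2).2
  obtain ⟨u, hu⟩ := hw.exists_orthonormalBasis_extension_of_card_eq (by simpa using hm)
  refine ⟨u, v, fun i j => ?_⟩
  by_cases hj : f.singularValues j = 0
  · have map_eq_zero : f (v j) = 0 := by simpa [hj] using inner_map_eigenvectorBasis f hn j j
    rw [map_eq_zero, inner_zero_right]
    split_ifs with hij
    · rw [hij, hj, RCLike.ofReal_zero]
    · rfl
  · have map_eq : f (v j) = (f.singularValues j : 𝕜) • u ⟨j, (lt_of_ne hj).1⟩ := by
      rw [hu _ hj, show w ⟨j, _⟩ = _ from dif_pos j.2, smul_inv_smul₀ (RCLike.ofReal_ne_zero.2 hj)]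
    by_cases hij : (i : ℕ) = j <;>
      simp [map_eq, inner_smul_right, u.inner_eq_ite, hij, Fin.ext_iff]

end SingularValueDecomposition

section GramMatrices

variable {k m n 𝕜 : Type*} [Fintype m] [RCLike 𝕜]

theorem re_conjTranspose_mul_self_apply_self_nonneg [Finite n] (Y : Matrix m n 𝕜) (i : n) :
    0 ≤ RCLike.re ((Yᴴ * Y) i i) :=
  (RCLike.nonneg_iff.1 (posSemidef_conjTranspose_mul_self Y).diag_nonneg).1

variable [Fintype n]

theorem re_trace_conjTranspose (A : Matrix n n 𝕜) :
    RCLike.re Aᴴ.trace = RCLike.re A.trace := by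
  rw [trace_conjTranspose, RCLike.star_def, RCLike.conj_re]

theorem re_trace_gram_sub (F G : Matrix m n 𝕜) :
    RCLike.re ((F - G)ᴴ * (F - G)).trace =
      RCLike.re (Fᴴ * F).trace - 2 * RCLike.re (Fᴴ * G).trace + RCLike.re (Gᴴ * G).trace := by
  have cross_eq : RCLike.re (Gᴴ * F).trace = RCLike.re (Fᴴ * G).trace := by
    rw [← re_trace_conjTranspose, conjTranspose_mul, conjTranspose_conjTranspose]
  rw [conjTranspose_sub, Matrix.sub_mul, Matrix.mul_sub, Matrix.mul_sub]
  simp only [trace_sub, map_sub, cross_eq]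
  ring

variable [DecidableEq n]

theorem isUnit_one_add_gram (K : Matrix m n 𝕜) : IsUnit (1 + Kᴴ * K) :=
  (PosDef.one.add_posSemidef (posSemidef_conjTranspose_mul_self K)).isUnit

theorem inv_one_add_gram_mul_gram (K : Matrix m n 𝕜) :
    (1 + Kᴴ * K)⁻¹ * (Kᴴ * K) = 1 - (1 + Kᴴ * K)⁻¹ := by
  rw [eq_sub_iff_add_eq']
  simpa [Matrix.mul_add] using
    nonsing_inv_mul (1 + Kᴴ * K) ((isUnit_iff_isUnit_det _).1 (isUnit_one_add_gram K))

theorem sub_mul_inv_one_add_gram_mul (F : Matrix k n 𝕜) (K : Matrix m n 𝕜) :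
    F - F * (1 + Kᴴ * K)⁻¹ * Kᴴ * K = F * (1 + Kᴴ * K)⁻¹ := by
  rw [Matrix.mul_assoc _ Kᴴ, Matrix.mul_assoc, inv_one_add_gram_mul_gram, Matrix.mul_sub,
    Matrix.mul_one, sub_sub_cancel]

theorem isHermitian_inv_one_add_gram (K : Matrix m n 𝕜) : (1 + Kᴴ * K)⁻¹.IsHermitian :=
  (isHermitian_one.add (isHermitian_conjTranspose_mul_self K)).inv

theorem trace_gram_mul_inv_one_add_gram [Fintype k] (F : Matrix k n 𝕜) (K : Matrix m n 𝕜) :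
    (Fᴴ * F * (1 + Kᴴ * K)⁻¹).trace =
      ((F * (1 + Kᴴ * K)⁻¹)ᴴ * (F * (1 + Kᴴ * K)⁻¹)).trace +
        ((F * (1 + Kᴴ * K)⁻¹ * Kᴴ)ᴴ * (F * (1 + Kᴴ * K)⁻¹ * Kᴴ)).trace := by
  have gram_mul := inv_one_add_gram_mul_gram K
  have herm := (isHermitian_inv_one_add_gram K).eq
  set G := (1 + Kᴴ * K)⁻¹
  have split_inv : G = G * G + G * (Kᴴ * K) * G := by
    rw [gram_mul, Matrix.sub_mul, Matrix.one_mul, add_sub_cancel]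
  calc (Fᴴ * F * G).trace
      = (Fᴴ * F * (G * G)).trace + (Fᴴ * F * (G * (Kᴴ * K) * G)).trace := by
        rw [← trace_add, ← Matrix.mul_add, ← split_inv]
    _ = _ := by
        congr 1
        · rw [conjTranspose_mul, herm, ← Matrix.mul_assoc (Fᴴ * F), trace_mul_comm]
          simp only [Matrix.mul_assoc]
        · rw [show Fᴴ * F * (G * (Kᴴ * K) * G) = Fᴴ * F * G * Kᴴ * (K * G) by
            simp only [Matrix.mul_assoc], trace_mul_comm]
          simp only [conjTranspose_mul, conjTranspose_conjTranspose, herm, Matrix.mul_assoc]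

end GramMatrices

section SingularValues

variable {𝕜 : Type*} [RCLike 𝕜] {k m n : ℕ}

variable (𝕜 m n) in
/-- The `m × n` matrix with the real numbers `d 0, d 1, …` on its main diagonal and zeros elsewhere.
The entries are drawn from one infinite sequence so that matrices of different shapes can share
them. -/
def rectDiagonal (d : ℕ → ℝ) : Matrix (Fin m) (Fin n) 𝕜 :=
  of fun i j => if (i : ℕ) = j then (d i : 𝕜) else 0

theorem rectDiagonal_self (d : ℕ → ℝ) :
    rectDiagonal 𝕜 n n d = diagonal fun i : Fin n => (d i : 𝕜) := by
  ext i j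
  simp [rectDiagonal, diagonal_apply, Fin.ext_iff]

theorem rectDiagonal_one : rectDiagonal 𝕜 n n 1 = 1 := by
  simp [rectDiagonal_self]

theorem conjTranspose_rectDiagonal (d : ℕ → ℝ) :
    (rectDiagonal 𝕜 m n d)ᴴ = rectDiagonal 𝕜 n m d := by
  ext i j
  by_cases h : (i : ℕ) = j
  · simp [rectDiagonal, h]
  · simp [rectDiagonal, h, Ne.symm h]

theorem one_add_smul_rectDiagonal (c : ℝ) (d : ℕ → ℝ) :
    1 + (c : 𝕜) • rectDiagonal 𝕜 n n d = rectDiagonal 𝕜 n n fun i => 1 + c * d i := by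
  rw [← rectDiagonal_one]
  ext i j
  by_cases h : (i : ℕ) = j <;> simp [rectDiagonal, h]

theorem rectDiagonal_mul (d e : ℕ → ℝ)
    (hde : ∀ i, k ≤ i → i < m → i < n → d i * e i = 0) :
    rectDiagonal 𝕜 m k d * rectDiagonal 𝕜 k n e = rectDiagonal 𝕜 m n (d * e) := by
  ext i j
  simp only [rectDiagonal, mul_apply, of_apply, Pi.mul_apply]
  by_cases hik : (i : ℕ) < k
  · rw [Finset.sum_eq_single ⟨i, hik⟩ (fun l _ hl => ?_) (by simp)]
    · by_cases h : (i : ℕ) = j <;> simp [h]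
    · have : (i : ℕ) ≠ l := fun h => hl (Fin.ext h.symm)
      simp [this]
  · rw [Finset.sum_eq_zero fun l _ => by rw [if_neg (by lia), zero_mul]]
    split_ifs with h
    · rw [hde i (by lia) i.2 (by lia), RCLike.ofReal_zero]
    · rfl

theorem rectDiagonal_mul_rectDiagonal_self (d e : ℕ → ℝ) :
    rectDiagonal 𝕜 n n d * rectDiagonal 𝕜 n n e = rectDiagonal 𝕜 n n (d * e) :=
  rectDiagonal_mul _ _ (by lia)

theorem trace_rectDiagonal (d : ℕ → ℝ) :
    (rectDiagonal 𝕜 n n d).trace = ((∑ i : Fin n, d i : ℝ) : 𝕜) := by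
  simp [rectDiagonal_self, trace_diagonal]

theorem re_trace_mul_rectDiagonal (K : Matrix (Fin n) (Fin n) 𝕜) (d : ℕ → ℝ) :
    RCLike.re (K * rectDiagonal 𝕜 n n d).trace = ∑ i : Fin n, d i * RCLike.re (K i i) := by
  simp [rectDiagonal_self, trace, mul_comm]

/-- `A` has a singular value decomposition `U * Σ * Vᴴ` in which the diagonal matrix `Σ` carries the
nonincreasing sequence `σ`, padded with zeros. -/
structure HasSingularValues (A : Matrix (Fin m) (Fin n) 𝕜) (σ : ℕ → ℝ) : Prop where
  antitone : Antitone σ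
  nonneg : ∀ i, 0 ≤ σ i
  eq_zero : ∀ i, min m n ≤ i → σ i = 0
  exists_unitary : ∃ U ∈ unitaryGroup (Fin m) 𝕜, ∃ V ∈ unitaryGroup (Fin n) 𝕜,
    A = U * rectDiagonal 𝕜 m n σ * Vᴴ

theorem hasSingularValues_singularValues (A : Matrix (Fin m) (Fin n) 𝕜) :
    HasSingularValues A (toEuclideanLin A).singularValues where
  antitone := (toEuclideanLin A).singularValues_antitone
  nonneg := (toEuclideanLin A).singularValues_nonneg
  eq_zero i hi := by
    rw [LinearMap.singularValues_eq_zero_iff_le_finrank_range]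
    refine le_trans (le_min ?_ ?_) hi
    · simpa using Submodule.finrank_le (toEuclideanLin A).range
    · simpa using (toEuclideanLin A).finrank_range_le
  exists_unitary := by
    obtain ⟨u, v, huv⟩ := exists_orthonormalBasis_inner_map_eq_singularValues (toEuclideanLin A)
      (m := m) (n := n) (by simp) (by simp)
    set U := (EuclideanSpace.basisFun (Fin m) 𝕜).toBasis.toMatrix u
    set V := (EuclideanSpace.basisFun (Fin n) 𝕜).toBasis.toMatrix v
    have hU : U ∈ unitaryGroup (Fin m) 𝕜 :=
      OrthonormalBasis.toMatrix_orthonormalBasis_mem_unitary _ _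
    have hV : V ∈ unitaryGroup (Fin n) 𝕜 :=
      OrthonormalBasis.toMatrix_orthonormalBasis_mem_unitary _ _
    have diag_eq : Uᴴ * (A * V) = rectDiagonal 𝕜 m n (toEuclideanLin A).singularValues := by
      ext i j
      rw [rectDiagonal, of_apply, ← huv]
      simp [U, V, mul_apply, toLpLin_apply, mulVec, dotProduct,
        Module.Basis.toMatrix_apply, PiLp.inner_apply, mul_comm]
    have hU' : U * Uᴴ = 1 := mem_unitaryGroup_iff.1 hU
    have hV' : V * Vᴴ = 1 := mem_unitaryGroup_iff.1 hV
    refine ⟨U, hU, V, hV, ?_⟩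
    rw [← diag_eq, ← Matrix.mul_assoc U, hU', Matrix.one_mul, Matrix.mul_assoc, hV', Matrix.mul_one]

theorem HasSingularValues.conjTranspose {A : Matrix (Fin m) (Fin n) 𝕜} {σ : ℕ → ℝ}
    (hA : HasSingularValues A σ) : HasSingularValues Aᴴ σ where
  antitone := hA.antitone
  nonneg := hA.nonneg
  eq_zero i hi := hA.eq_zero i (min_comm n m ▸ hi)
  exists_unitary := by
    obtain ⟨U, hU, V, hV, rfl⟩ := hA.exists_unitary
    exact ⟨V, hV, U, hU, by
      simp [conjTranspose_mul, conjTranspose_rectDiagonal, Matrix.mul_assoc]⟩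

theorem HasSingularValues.exists_conjTranspose_mul_self {A : Matrix (Fin m) (Fin n) 𝕜} {σ : ℕ → ℝ}
    (hA : HasSingularValues A σ) : ∃ V ∈ unitaryGroup (Fin n) 𝕜,
      Aᴴ * A = V * rectDiagonal 𝕜 n n (fun i => σ i ^ 2) * Vᴴ := by
  obtain ⟨U, hU, V, hV, rfl⟩ := hA.exists_unitary
  refine ⟨V, hV, ?_⟩
  have hsq : rectDiagonal 𝕜 n m σ * rectDiagonal 𝕜 m n σ = rectDiagonal 𝕜 n n (σ * σ) :=
    rectDiagonal_mul _ _ fun i hi _ _ => by rw [hA.eq_zero i (by lia), zero_mul]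
  have hU' : Uᴴ * U = 1 := mem_unitaryGroup_iff'.1 hU
  rw [conjTranspose_mul, conjTranspose_mul, conjTranspose_rectDiagonal, conjTranspose_conjTranspose]
  calc V * (rectDiagonal 𝕜 n m σ * Uᴴ) * (U * rectDiagonal 𝕜 m n σ * Vᴴ)
      = V * (rectDiagonal 𝕜 n m σ * (Uᴴ * U) * rectDiagonal 𝕜 m n σ) * Vᴴ := by
        simp only [Matrix.mul_assoc]
    _ = _ := by
        rw [hU', Matrix.mul_one, hsq]
        exact congr_arg (V * rectDiagonal 𝕜 n n · * Vᴴ) (funext fun i => (sq (σ i)).symm)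

theorem HasSingularValues.antitone_sq {A : Matrix (Fin m) (Fin n) 𝕜} {σ : ℕ → ℝ}
    (hA : HasSingularValues A σ) : Antitone fun i => σ i ^ 2 :=
  fun _ j hij => pow_le_pow_left₀ (hA.nonneg j) (hA.antitone hij) 2

theorem HasSingularValues.sum_mul_sq_le {A : Matrix (Fin m) (Fin n) 𝕜}
    {V : Matrix (Fin n) (Fin n) 𝕜} {σ δ : ℕ → ℝ} (hA : HasSingularValues A σ) (hδ : Monotone δ)
    (hV : V ∈ unitaryGroup (Fin n) 𝕜) :
    ∑ i : Fin n, δ i * σ i ^ 2 ≤ ∑ i : Fin n, δ i * RCLike.re (((A * V)ᴴ * (A * V)) i i) := by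
  obtain ⟨W, hW, hAW⟩ := hA.exists_conjTranspose_mul_self
  have gram_eq : (A * V)ᴴ * (A * V) =
      Vᴴ * W * diagonal (fun i : Fin n => ((σ i ^ 2 : ℝ) : 𝕜)) * (Vᴴ * W)ᴴ := by
    calc (A * V)ᴴ * (A * V)
        = Vᴴ * (Aᴴ * A) * V := by simp only [conjTranspose_mul, Matrix.mul_assoc]
      _ = _ := by
        rw [hAW, rectDiagonal_self]
        simp only [conjTranspose_mul, conjTranspose_conjTranspose, Matrix.mul_assoc]
  rw [gram_eq]
  exact sum_mul_le_sum_mul_re_diag (mul_mem (Unitary.star_mem hV) hW)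
    ((hδ.antivary hA.antitone_sq).comp_right fun i : Fin n => (i : ℕ))

theorem sum_mul_re_gram_mul_rectDiagonal (Z : Matrix (Fin m) (Fin k) 𝕜) (δ : ℕ → ℝ) {e : ℕ → ℝ}
    (he : ∀ i, n ≤ i → e i = 0) :
    ∑ i : Fin n, δ i * RCLike.re (((Z * rectDiagonal 𝕜 k n e)ᴴ * (Z * rectDiagonal 𝕜 k n e)) i i) =
      ∑ i : Fin k, δ i * e i ^ 2 * RCLike.re ((Zᴴ * Z) i i) := by
  have weights_eq : rectDiagonal 𝕜 k n e * (rectDiagonal 𝕜 n n δ * rectDiagonal 𝕜 n k e) =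
      rectDiagonal 𝕜 k k (e * (δ * e)) := by
    rw [rectDiagonal_mul _ _ fun i _ _ _ => by lia, rectDiagonal_mul]
    intro i hi _ _
    rw [he i hi, zero_mul]
  rw [← re_trace_mul_rectDiagonal, conjTranspose_mul, conjTranspose_rectDiagonal, Matrix.mul_assoc,
    Matrix.mul_assoc, trace_mul_comm, Matrix.mul_assoc, Matrix.mul_assoc, Matrix.mul_assoc,
    weights_eq, ← Matrix.mul_assoc, re_trace_mul_rectDiagonal]
  exact Finset.sum_congr rfl fun i _ => by simp only [Pi.mul_apply]; ring

theorem HasSingularValues.sum_mul_sq_le_re_trace {Y : Matrix (Fin m) (Fin k) 𝕜}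
    {E : Matrix (Fin k) (Fin n) 𝕜} {e ν δ : ℕ → ℝ} (hYE : HasSingularValues (Y * E) ν)
    (hE : HasSingularValues E e) (hδ : Monotone δ) (hδe : ∀ i, δ i * e i ^ 2 ≤ 1) :
    ∑ i : Fin n, δ i * ν i ^ 2 ≤ RCLike.re (Yᴴ * Y).trace := by
  obtain ⟨U, hU, V, hV, hEUV⟩ := hE.exists_unitary
  have factor_eq : Y * E * V = Y * U * rectDiagonal 𝕜 k n e := by
    have hV' : Vᴴ * V = 1 := mem_unitaryGroup_iff'.1 hV
    simp only [hEUV, Matrix.mul_assoc, hV', Matrix.mul_one]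
  calc ∑ i : Fin n, δ i * ν i ^ 2
      ≤ ∑ i : Fin n, δ i * RCLike.re (((Y * E * V)ᴴ * (Y * E * V)) i i) :=
        hYE.sum_mul_sq_le hδ hV
    _ = ∑ i : Fin k, δ i * e i ^ 2 * RCLike.re (((Y * U)ᴴ * (Y * U)) i i) := by
        rw [factor_eq, sum_mul_re_gram_mul_rectDiagonal _ _ fun i hi => hE.eq_zero i (by lia)]
    _ ≤ ∑ i : Fin k, RCLike.re (((Y * U)ᴴ * (Y * U)) i i) := Finset.sum_le_sum fun i _ =>
        mul_le_of_le_one_left (re_conjTranspose_mul_self_apply_self_nonneg _ i) (hδe i)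
    _ = RCLike.re ((Y * U)ᴴ * (Y * U)).trace := (map_sum RCLike.re _ _).symm
    _ = RCLike.re (Yᴴ * Y).trace := by
        have hU' : U * Uᴴ = 1 := mem_unitaryGroup_iff.1 hU
        rw [trace_mul_comm, conjTranspose_mul, Matrix.mul_assoc, ← Matrix.mul_assoc U, hU',
          Matrix.one_mul, trace_mul_comm]

end SingularValues

section Majorization

variable {𝕜 : Type*} [RCLike 𝕜] {k m n : ℕ}

theorem monotone_ite_inv_sq {e : ℕ → ℝ} {C : ℝ} (he : Antitone e) (he0 : ∀ i, 0 ≤ e i)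
    (hC : ∀ i, e i ≠ 0 → (e i ^ 2)⁻¹ ≤ C) :
    Monotone fun i => if e i = 0 then C else (e i ^ 2)⁻¹ := by
  intro i j hij
  dsimp only
  have hj := he0 j
  have hle := he hij
  split_ifs with hi hj'
  · rfl
  · exact absurd (le_antisymm (hi ▸ hle) hj) hj'
  · exact hC i hi
  · gcongr

theorem exists_inv_sq_le {e : ℕ → ℝ} (he : ∀ i, n ≤ i → e i = 0) :
    ∃ C₀, ∀ i, e i ≠ 0 → (e i ^ 2)⁻¹ ≤ C₀ :=
  ⟨∑ i ∈ Finset.range n, (e i ^ 2)⁻¹, fun i hi => Finset.single_le_sum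
    (f := fun i => (e i ^ 2)⁻¹) (fun j _ => by positivity)
    (Finset.mem_range.2 (not_le.1 (mt (he i) hi)))⟩

-- The weight `C` at the zeros of `e` can be arbitrarily large, which forces `ν` to vanish there.
theorem HasSingularValues.exists_sum_ite_le_re_trace {Y : Matrix (Fin m) (Fin k) 𝕜}
    {E : Matrix (Fin k) (Fin n) 𝕜} {e ν : ℕ → ℝ} (hYE : HasSingularValues (Y * E) ν)
    (hE : HasSingularValues E e) :
    ∃ C₀, ∀ C, C₀ ≤ C →
      ∑ i : Fin n, (if e i = 0 then C else (e i ^ 2)⁻¹) * ν i ^ 2 ≤ RCLike.re (Yᴴ * Y).trace := by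
  obtain ⟨C₀, hC₀⟩ := exists_inv_sq_le (n := min k n) hE.eq_zero
  refine ⟨C₀, fun C hC => hYE.sum_mul_sq_le_re_trace hE
    (monotone_ite_inv_sq hE.antitone hE.nonneg fun i hi => (hC₀ i hi).trans hC) fun i => ?_⟩
  by_cases hi : e i = 0
  · simp [hi]
  · simp [hi]

theorem HasSingularValues.eq_zero_of_right_eq_zero {Y : Matrix (Fin m) (Fin k) 𝕜}
    {E : Matrix (Fin k) (Fin n) 𝕜} {e ν : ℕ → ℝ} (hYE : HasSingularValues (Y * E) ν)
    (hE : HasSingularValues E e) {i : ℕ} (hi : e i = 0) : ν i = 0 := by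
  by_contra hν
  have hin : i < n := (lt_min_iff.1 (not_le.1 (mt (hYE.eq_zero i) hν))).2
  obtain ⟨C₀, hC₀⟩ := hYE.exists_sum_ite_le_re_trace hE
  set t := RCLike.re (Yᴴ * Y).trace
  have hν2 : 0 < ν i ^ 2 := by positivity
  set C := max (max C₀ 0) ((t + 1) / ν i ^ 2)
  have single_le : C * ν i ^ 2 ≤ t := by
    refine le_trans ?_ (hC₀ C ((le_max_left _ _).trans (le_max_left _ _)))
    have := Finset.single_le_sum
      (f := fun i : Fin n => (if e i = 0 then C else (e i ^ 2)⁻¹) * ν i ^ 2)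
      (fun j _ => by split_ifs <;> positivity) (Finset.mem_univ (⟨i, hin⟩ : Fin n))
    simpa [hi] using this
  have : t + 1 ≤ C * ν i ^ 2 := (div_le_iff₀ hν2).1 (le_max_right _ _)
  linarith

theorem HasSingularValues.sum_sq_div_sq_le_re_trace {Y : Matrix (Fin m) (Fin k) 𝕜}
    {E : Matrix (Fin k) (Fin n) 𝕜} {e ν : ℕ → ℝ} (hYE : HasSingularValues (Y * E) ν)
    (hE : HasSingularValues E e) :
    ∑ i : Fin n, ν i ^ 2 / e i ^ 2 ≤ RCLike.re (Yᴴ * Y).trace := by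
  obtain ⟨C, hC⟩ := hYE.exists_sum_ite_le_re_trace hE
  refine le_of_eq_of_le (Finset.sum_congr rfl fun i _ => ?_) (hC C le_rfl)
  by_cases hi : e i = 0
  · simp [hi, hYE.eq_zero_of_right_eq_zero hE hi]
  · rw [if_neg hi, div_eq_inv_mul]

theorem HasSingularValues.sum_mul_re_apply_self_le {N : Matrix (Fin n) (Fin n) 𝕜} {ν f : ℕ → ℝ}
    (hN : HasSingularValues N ν) (hf : Antitone f) (hf0 : ∀ i, 0 ≤ f i) :
    ∑ i : Fin n, f i * RCLike.re (N i i) ≤ ∑ i : Fin n, f i * ν i := by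
  obtain ⟨U, hU, V, hV, rfl⟩ := hN.exists_unitary
  rw [rectDiagonal_self]
  exact sum_mul_re_diag_le_sum_mul hU hV
    ((hf.monovary hN.antitone).comp_right fun i : Fin n => (i : ℕ)) (fun i => hf0 i)
    fun i => hN.nonneg i

theorem HasSingularValues.sum_sub_mul_sq_le {N : Matrix (Fin n) (Fin n) 𝕜} {ν f q : ℕ → ℝ}
    (hN : HasSingularValues N ν) (hfq : Antitone (f * q)) (hfq0 : ∀ i, 0 ≤ f i * q i)
    (hq : Monotone q) (hq0 : ∀ i, 0 ≤ q i) :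
    ∑ i : Fin n, (f i - q i * ν i) ^ 2 ≤
      RCLike.re ((rectDiagonal 𝕜 n n f - N * rectDiagonal 𝕜 n n q)ᴴ *
        (rectDiagonal 𝕜 n n f - N * rectDiagonal 𝕜 n n q)).trace := by
  set F := rectDiagonal 𝕜 n n f with hF
  set Q := rectDiagonal 𝕜 n n q with hQ
  have trace_sq : RCLike.re (Fᴴ * F).trace = ∑ i : Fin n, f i ^ 2 := by
    rw [hF, conjTranspose_rectDiagonal, rectDiagonal_mul_rectDiagonal_self, trace_rectDiagonal]
    simp [sq]
  have trace_cross : RCLike.re (Fᴴ * (N * Q)).trace =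
      ∑ i : Fin n, f i * q i * RCLike.re (N i i) := by
    rw [hF, hQ, conjTranspose_rectDiagonal, trace_mul_comm, Matrix.mul_assoc,
      rectDiagonal_mul_rectDiagonal_self, re_trace_mul_rectDiagonal]
    simp [mul_comm]
  have trace_gram : RCLike.re ((N * Q)ᴴ * (N * Q)).trace =
      ∑ i : Fin n, q i ^ 2 * RCLike.re ((Nᴴ * N) i i) := by
    rw [hQ, conjTranspose_mul, conjTranspose_rectDiagonal, trace_mul_comm, Matrix.mul_assoc,
      ← Matrix.mul_assoc _ _ Nᴴ, rectDiagonal_mul_rectDiagonal_self, trace_mul_comm,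
      Matrix.mul_assoc, trace_mul_comm, re_trace_mul_rectDiagonal]
    simp [sq]
  have cross_le := hN.sum_mul_re_apply_self_le hfq hfq0
  have gram_ge := hN.sum_mul_sq_le (V := 1) (δ := fun i => q i ^ 2)
    (fun i j hij => pow_le_pow_left₀ (hq0 i) (hq hij) 2) (one_mem _)
  rw [Matrix.mul_one] at gram_ge
  calc ∑ i : Fin n, (f i - q i * ν i) ^ 2
      = ∑ i : Fin n, f i ^ 2 - 2 * ∑ i : Fin n, f i * q i * ν i +
          ∑ i : Fin n, q i ^ 2 * ν i ^ 2 := by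
        rw [Finset.mul_sum, ← Finset.sum_sub_distrib, ← Finset.sum_add_distrib]
        exact Finset.sum_congr rfl fun i _ => by ring
    _ ≤ _ := by
        rw [re_trace_gram_sub, trace_sq, trace_cross, trace_gram]
        simp only [Pi.mul_apply] at cross_le
        linarith

end Majorization

section MeanSquareError

variable {𝕜 : Type*} [RCLike 𝕜] {k m n : ℕ}

theorem sum_fin_eq_sum_fin {M : Type*} [AddCommMonoid M] {f : ℕ → M}
    (hf : ∀ i, min m n ≤ i → f i = 0) :
    ∑ i : Fin m, f i = ∑ i : Fin n, f i := by
  have sum_eq {l : ℕ} (hl : min m n ≤ l) :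
      ∑ i : Fin l, f i = ∑ i ∈ Finset.range (min m n), f i := by
    rw [Fin.sum_univ_eq_sum_range]
    exact (Finset.sum_subset (Finset.range_mono hl) fun i _ hi => hf i
      (not_lt.1 (mt Finset.mem_range.2 hi))).symm
  rw [sum_eq (min_le_left m n), sum_eq (min_le_right m n)]

theorem HasSingularValues.eq_zero_of_left_eq_zero {A : Matrix (Fin m) (Fin k) 𝕜}
    {B : Matrix (Fin k) (Fin n) 𝕜} {σ ν : ℕ → ℝ} (hAB : HasSingularValues (A * B) ν)
    (hA : HasSingularValues A σ) {i : ℕ} (hi : σ i = 0) : ν i = 0 := by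
  have hAB' := hAB.conjTranspose
  rw [conjTranspose_mul] at hAB'
  exact hAB'.eq_zero_of_right_eq_zero hA.conjTranspose hi

theorem HasSingularValues.sum_sq_div_sq_le_re_trace_mul_conjTranspose
    {A : Matrix (Fin m) (Fin k) 𝕜} {B : Matrix (Fin k) (Fin n) 𝕜} {σ ν : ℕ → ℝ}
    (hAB : HasSingularValues (A * B) ν) (hA : HasSingularValues A σ) :
    ∑ i : Fin n, ν i ^ 2 / σ i ^ 2 ≤ RCLike.re (B * Bᴴ).trace := by
  have hAB' := hAB.conjTranspose
  rw [conjTranspose_mul] at hAB'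
  calc ∑ i : Fin n, ν i ^ 2 / σ i ^ 2
      = ∑ i : Fin m, ν i ^ 2 / σ i ^ 2 :=
        sum_fin_eq_sum_fin (f := fun i => ν i ^ 2 / σ i ^ 2) fun i hi => by
          simp [hAB'.eq_zero i hi]
    _ ≤ RCLike.re (Bᴴᴴ * Bᴴ).trace := hAB'.sum_sq_div_sq_le_re_trace hA.conjTranspose
    _ = RCLike.re (B * Bᴴ).trace := by rw [conjTranspose_conjTranspose]

theorem div_one_add_sq_div_le {a m e ν : ℝ} (ha : 0 ≤ a) (hm : 0 < m) (hν : e = 0 → ν = 0) :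
    a / (1 + e ^ 2 / m) ≤ (√a - (√m)⁻¹ * ν) ^ 2 + ν ^ 2 / e ^ 2 := by
  obtain ⟨p, hp, rfl⟩ : ∃ p, 0 ≤ p ∧ a = p ^ 2 := ⟨√a, Real.sqrt_nonneg a, (Real.sq_sqrt ha).symm⟩
  obtain ⟨q, hq, rfl⟩ : ∃ q, 0 < q ∧ m = q ^ 2 :=
    ⟨√m, Real.sqrt_pos.2 hm, (Real.sq_sqrt hm.le).symm⟩
  rw [Real.sqrt_sq hp, Real.sqrt_sq hq.le]
  by_cases he : e = 0
  · simp [he, hν he]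
  · have : (p - q⁻¹ * ν) ^ 2 + ν ^ 2 / e ^ 2 - p ^ 2 / (1 + e ^ 2 / q ^ 2) =
        (p * q * e ^ 2 - (q ^ 2 + e ^ 2) * ν) ^ 2 / (q ^ 2 * e ^ 2 * (q ^ 2 + e ^ 2)) := by
      field_simp
      ring
    rw [← sub_nonneg, this]
    positivity

theorem sum_div_le_re_trace_rectDiagonal_mul_inv {K : Matrix (Fin m) (Fin n) 𝕜} {a μ e : ℕ → ℝ}
    (ha : ∀ i, 0 ≤ a i) (hμ : Antitone μ) (hμ0 : ∀ i, 0 < μ i)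
    (haμ : Antitone fun i => a i / μ i)
    (hE : HasSingularValues (K * rectDiagonal 𝕜 n n fun i => √(μ i)) e) :
    ∑ i : Fin n, a i / (1 + e i ^ 2 / μ i) ≤
      RCLike.re (rectDiagonal 𝕜 n n a * (1 + Kᴴ * K)⁻¹).trace := by
  set F := rectDiagonal 𝕜 n n fun i => √(a i) with hF
  set R := rectDiagonal 𝕜 n n fun i => √(μ i) with hR
  set Q := rectDiagonal 𝕜 n n fun i => (√(μ i))⁻¹ with hQ
  set Y := F * (1 + Kᴴ * K)⁻¹ * Kᴴ
  have gram_F : Fᴴ * F = rectDiagonal 𝕜 n n a := by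
    rw [hF, conjTranspose_rectDiagonal, rectDiagonal_mul_rectDiagonal_self]
    exact congr_arg _ (funext fun i => Real.mul_self_sqrt (ha i))
  have R_mul_Q : R * Q = 1 := by
    rw [hR, hQ, rectDiagonal_mul_rectDiagonal_self, ← rectDiagonal_one]
    exact congr_arg _ (funext fun i => mul_inv_cancel₀ (Real.sqrt_pos.2 (hμ0 i)).ne')
  obtain ⟨ν, hN⟩ : ∃ ν, HasSingularValues (Y * (K * R)) ν :=
    ⟨_, hasSingularValues_singularValues _⟩
  have residual : F - Y * (K * R) * Q = F * (1 + Kᴴ * K)⁻¹ := by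
    rw [Matrix.mul_assoc Y, Matrix.mul_assoc K, R_mul_Q, Matrix.mul_one]
    exact sub_mul_inv_one_add_gram_mul F K
  have antitone_amplitude : Antitone fun i => √(a i) * (√(μ i))⁻¹ := by
    simp only [← div_eq_mul_inv, ← Real.sqrt_div (ha _)]
    exact fun i j hij => Real.sqrt_le_sqrt (haμ hij)
  have residual_ge := hN.sum_sub_mul_sq_le (f := fun i => √(a i)) (q := fun i => (√(μ i))⁻¹)
    antitone_amplitude (fun i => by positivity)
    (fun i j hij => inv_anti₀ (Real.sqrt_pos.2 (hμ0 j)) (Real.sqrt_le_sqrt (hμ hij)))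
    (fun i => by positivity)
  rw [residual] at residual_ge
  calc ∑ i : Fin n, a i / (1 + e i ^ 2 / μ i)
      ≤ ∑ i : Fin n, ((√(a i) - (√(μ i))⁻¹ * ν i) ^ 2 + ν i ^ 2 / e i ^ 2) :=
        Finset.sum_le_sum fun i _ => div_one_add_sq_div_le (ha i) (hμ0 i)
          (hN.eq_zero_of_right_eq_zero hE)
    _ ≤ _ := by
        rw [Finset.sum_add_distrib, ← gram_F, trace_gram_mul_inv_one_add_gram, map_add]
        exact add_le_add residual_ge (hN.sum_sq_div_sq_le_re_trace hE)

end MeanSquareError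

section RelayNetwork

variable {r s u 𝕜 : Type*} [Fintype r] [Fintype s] [Fintype u] [DecidableEq s] [RCLike 𝕜]

/-- The power spent by the relay when it forwards with the matrix `X`: its received signal has
covariance `1 + c • A`, where `A` is the Gram matrix of the first hop and `c` the source power per
antenna. -/
noncomputable def relayPower (c : ℝ) (A : Matrix s s 𝕜) (X : Matrix u s 𝕜) : 𝕜 :=
  (X * (1 + (c : 𝕜) • A) * Xᴴ).trace

/-- The part of the gain `A.trace` of the first hop that the relay matrix `X` fails to deliver over
the second hop `H`; maximizing the capacity means minimizing it. -/
noncomputable def gainLoss (A : Matrix s s 𝕜) (H : Matrix r u 𝕜) (X : Matrix u s 𝕜) : 𝕜 :=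
  (A * (1 + Xᴴ * Hᴴ * H * X)⁻¹).trace

theorem relayPower_conj (c : ℝ) {U : Matrix s s 𝕜} (hU : U ∈ unitaryGroup s 𝕜)
    (D : Matrix s s 𝕜) (X : Matrix u s 𝕜) :
    relayPower c (U * D * Uᴴ) X = relayPower c D (X * U) := by
  have hU' : U * Uᴴ = 1 := mem_unitaryGroup_iff.1 hU
  have covariance_eq : 1 + (c : 𝕜) • (U * D * Uᴴ) = U * (1 + (c : 𝕜) • D) * Uᴴ := by
    simp [Matrix.mul_add, Matrix.add_mul, hU']
  rw [relayPower, relayPower, covariance_eq]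
  simp only [conjTranspose_mul, Matrix.mul_assoc]

theorem gainLoss_conj {U : Matrix s s 𝕜} (hU : U ∈ unitaryGroup s 𝕜)
    (D : Matrix s s 𝕜) (H : Matrix r u 𝕜) (X : Matrix u s 𝕜) :
    gainLoss (U * D * Uᴴ) H X = gainLoss D H (X * U) := by
  have hU' : U * Uᴴ = 1 := mem_unitaryGroup_iff.1 hU
  have hU'' : Uᴴ * U = 1 := mem_unitaryGroup_iff'.1 hU
  have conj_eq : 1 + (X * U)ᴴ * Hᴴ * H * (X * U) = Uᴴ * (1 + Xᴴ * Hᴴ * H * X) * U := by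
    simp [Matrix.mul_add, Matrix.add_mul, hU'', conjTranspose_mul, Matrix.mul_assoc]
  rw [gainLoss, gainLoss, conj_eq, Matrix.mul_inv_rev, Matrix.mul_inv_rev, inv_eq_left_inv hU'',
    inv_eq_left_inv hU', Matrix.mul_assoc U, Matrix.mul_assoc U, trace_mul_comm]
  simp only [Matrix.mul_assoc]

theorem ofReal_re_gainLoss {A : Matrix s s 𝕜} (hA : A.IsHermitian)
    (H : Matrix r u 𝕜) (X : Matrix u s 𝕜) :
    (RCLike.re (gainLoss A H X) : 𝕜) = gainLoss A H X := by
  have herm : (1 + Xᴴ * Hᴴ * H * X)⁻¹.IsHermitian := by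
    simpa [conjTranspose_mul, Matrix.mul_assoc] using isHermitian_inv_one_add_gram (H * X)
  rw [← RCLike.conj_eq_iff_re, ← RCLike.star_def, gainLoss, ← trace_conjTranspose,
    conjTranspose_mul, herm.eq, hA.eq, trace_mul_comm]

end RelayNetwork

section LowerBound

variable {𝕜 : Type*} [RCLike 𝕜] {r s u : ℕ}

theorem monotoneOn_div_one_add_mul {c : ℝ} (hc : 0 ≤ c) :
    MonotoneOn (fun x => x / (1 + c * x)) (Set.Ici 0) := by
  intro x (hx : 0 ≤ x) y (hy : 0 ≤ y) hxy
  dsimp only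
  rw [div_le_div_iff₀ (by positivity) (by positivity)]
  linarith

theorem HasSingularValues.exists_allocation_le {H : Matrix (Fin r) (Fin u) 𝕜} {τ a : ℕ → ℝ} {c : ℝ}
    (hH : HasSingularValues H τ) (hc : 0 ≤ c) (ha : Antitone a) (ha0 : ∀ i, 0 ≤ a i)
    (X : Matrix (Fin u) (Fin s) 𝕜) :
    ∃ y : ℕ → ℝ, (∀ i, 0 ≤ y i) ∧ (∀ i, τ i = 0 → y i = 0) ∧
      ∑ i : Fin s, (1 + c * a i) / τ i ^ 2 * y i ≤
        RCLike.re (relayPower c (rectDiagonal 𝕜 s s a) X) ∧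
      ∑ i : Fin s, a i / (1 + y i) ≤ RCLike.re (gainLoss (rectDiagonal 𝕜 s s a) H X) := by
  have one_add_pos (i : ℕ) : 0 < 1 + c * a i := by have := ha0 i; positivity
  set R := rectDiagonal 𝕜 s s fun i => √(1 + c * a i) with hR
  obtain ⟨e, hE⟩ : ∃ e, HasSingularValues (H * (X * R)) e := ⟨_, hasSingularValues_singularValues _⟩
  refine ⟨fun i => e i ^ 2 / (1 + c * a i), fun i => div_nonneg (sq_nonneg _) (one_add_pos i).le,
    fun i hi => by simp [hE.eq_zero_of_left_eq_zero hH hi], ?_, ?_⟩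
  · have covariance_eq : 1 + (c : 𝕜) • rectDiagonal 𝕜 s s a = R * Rᴴ := by
      rw [hR, conjTranspose_rectDiagonal, rectDiagonal_mul_rectDiagonal_self,
        one_add_smul_rectDiagonal]
      exact congr_arg _ (funext fun i => (Real.mul_self_sqrt (one_add_pos i).le).symm)
    have power_eq : relayPower c (rectDiagonal 𝕜 s s a) X = (X * R * (X * R)ᴴ).trace := by
      rw [relayPower, covariance_eq, conjTranspose_mul]
      simp only [Matrix.mul_assoc]
    rw [power_eq]
    refine le_of_eq_of_le (Finset.sum_congr rfl fun i _ => ?_)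
      (hE.sum_sq_div_sq_le_re_trace_mul_conjTranspose hH)
    have := (one_add_pos i).ne'
    field_simp
  · rw [← Matrix.mul_assoc] at hE
    have := sum_div_le_re_trace_rectDiagonal_mul_inv ha0
      (fun i j hij => by have := ha hij; gcongr) one_add_pos
      (fun i j hij => monotoneOn_div_one_add_mul hc (ha0 j) (ha0 i) (ha hij)) hE
    simpa only [gainLoss, conjTranspose_mul, Matrix.mul_assoc] using this

end LowerBound

section WaterFilling

variable {ι : Type*} [Fintype ι] {a g y : ι → ℝ} {θ P : ℝ}

/-- The signal-to-noise ratio given by the water-filling rule to a mode whose efficiency (the square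
root of gain over cost) is `κ`; the water level `θ` is the inverse square root of the Lagrange
multiplier of the power constraint. -/
def waterFill (θ κ : ℝ) : ℝ :=
  max 0 (θ * κ - 1)

theorem waterFill_nonneg (θ κ : ℝ) : 0 ≤ waterFill θ κ :=
  le_max_left _ _

theorem waterFill_of_le {κ : ℝ} (h : θ * κ ≤ 1) : waterFill θ κ = 0 :=
  max_eq_left (by linarith)

theorem waterFill_zero (θ : ℝ) : waterFill θ 0 = 0 :=
  waterFill_of_le (by simp)

theorem monotone_waterFill (hθ : 0 ≤ θ) : Monotone (waterFill θ) := fun κ κ' h => by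
  unfold waterFill
  gcongr

theorem sq_div_one_add_waterFill_le {κ y : ℝ} (hq : 0 ≤ θ * κ) (hy : 0 ≤ y) :
    (θ * κ) ^ 2 / (1 + waterFill θ κ) ≤ (θ * κ) ^ 2 / (1 + y) + (y - waterFill θ κ) := by
  rw [waterFill]
  set q := θ * κ
  have hy' : 0 < 1 + y := by positivity
  rcases le_total q 1 with h | h
  · rw [max_eq_left (by linarith), ← sub_nonneg]
    have : q ^ 2 / (1 + y) + (y - 0) - q ^ 2 / (1 + 0) = y * (1 - q ^ 2 + y) / (1 + y) := by
      field_simp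
      ring
    have hq2 : q ^ 2 ≤ 1 := pow_le_one₀ hq h
    rw [this]
    exact div_nonneg (mul_nonneg hy (by linarith)) hy'.le
  · rw [max_eq_right (by linarith), ← sub_nonneg]
    have : q ^ 2 / (1 + y) + (y - (q - 1)) - q ^ 2 / (1 + (q - 1)) =
        (q - (1 + y)) ^ 2 / (1 + y) := by
      have : 1 + (q - 1) ≠ 0 := by linarith
      field_simp
      ring
    rw [this]
    positivity

theorem sum_div_one_add_waterFill_le (hθ : 0 < θ) (ha : ∀ i, 0 ≤ a i) (hg : ∀ i, 0 ≤ g i)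
    (hy : ∀ i, 0 ≤ y i) (hgy : ∀ i, g i = 0 → y i = 0)
    (hsum : ∑ i, g i * y i ≤ ∑ i, g i * waterFill θ √(a i / g i)) :
    ∑ i, a i / (1 + waterFill θ √(a i / g i)) ≤ ∑ i, a i / (1 + y i) := by
  set x := fun i => waterFill θ √(a i / g i) with hx
  have tangent_le (i : ι) :
      θ ^ 2 * (a i / (1 + x i)) ≤ θ ^ 2 * (a i / (1 + y i)) + g i * (y i - x i) := by
    by_cases hgi : g i = 0
    · simp [hx, hgi, hgy i hgi, waterFill_zero]
    · have gain_eq : θ ^ 2 * a i = g i * (θ * √(a i / g i)) ^ 2 := by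
        rw [mul_pow, Real.sq_sqrt (div_nonneg (ha i) (hg i))]
        field_simp
      rw [← mul_div_assoc, ← mul_div_assoc, gain_eq, mul_div_assoc, mul_div_assoc, ← mul_add]
      exact mul_le_mul_of_nonneg_left (sq_div_one_add_waterFill_le (by positivity) (hy i)) (hg i)
  have sum_le := Finset.sum_le_sum fun i (_ : i ∈ Finset.univ) => tangent_le i
  simp only [mul_sub, Finset.sum_add_distrib, Finset.sum_sub_distrib, ← Finset.mul_sum] at sum_le
  exact le_of_mul_le_mul_left (by linarith) (pow_pos hθ 2)

theorem exists_sum_mul_waterFill_eq {κ : ι → ℝ} (hκ : ∀ i, 0 ≤ κ i) (hg : ∀ i, 0 ≤ g i)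
    (hP : 0 ≤ P) (hpos : ∃ i, 0 < κ i ∧ 0 < g i) :
    ∃ θ, 0 < θ ∧ ∑ i, g i * waterFill θ (κ i) = P := by
  obtain ⟨j, hκj, hgj⟩ := hpos
  have le_sum (i : ι) : κ i ≤ ∑ i, κ i := Finset.single_le_sum (fun i _ => hκ i) (Finset.mem_univ i)
  have sum_pos : 0 < ∑ i, κ i := hκj.trans_le (le_sum j)
  set θ₀ := (∑ i, κ i)⁻¹
  set θ₁ := (1 + P / g j) / κ j
  have hθ : θ₀ ≤ θ₁ := by
    refine (inv_anti₀ hκj (le_sum j)).trans ?_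
    rw [← one_div]
    exact div_le_div_of_nonneg_right (le_add_of_nonneg_right (by positivity)) hκj.le
  have power_θ₀ : ∑ i, g i * waterFill θ₀ (κ i) = 0 := Finset.sum_eq_zero fun i _ => by
    rw [waterFill_of_le, mul_zero]
    exact inv_mul_le_one_of_le₀ (le_sum i) sum_pos.le
  have power_θ₁ : P ≤ ∑ i, g i * waterFill θ₁ (κ i) := by
    have hPj : g j * waterFill θ₁ (κ j) = P := by
      rw [waterFill, div_mul_cancel₀ _ hκj.ne', add_sub_cancel_left,
        max_eq_right (by positivity), mul_div_cancel₀ _ hgj.ne']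
    rw [← hPj]
    exact Finset.single_le_sum (f := fun i => g i * waterFill θ₁ (κ i))
      (fun i _ => mul_nonneg (hg i) (waterFill_nonneg _ _)) (Finset.mem_univ j)
  have continuous_power : Continuous fun θ => ∑ i, g i * waterFill θ (κ i) := by
    unfold waterFill
    fun_prop
  obtain ⟨θ, hθmem, hθP⟩ := intermediate_value_Icc hθ continuous_power.continuousOn
    ⟨power_θ₀.trans_le hP, power_θ₁⟩
  exact ⟨θ, (inv_pos.2 sum_pos).trans_le hθmem.1, hθP⟩

theorem exists_waterFill_isMin (ha : ∀ i, 0 ≤ a i) (hg : ∀ i, 0 ≤ g i) (hP : 0 ≤ P) :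
    ∃ θ, 0 ≤ θ ∧ ∑ i, g i * waterFill θ √(a i / g i) ≤ P ∧
      ∀ y : ι → ℝ, (∀ i, 0 ≤ y i) → (∀ i, g i = 0 → y i = 0) → ∑ i, g i * y i ≤ P →
        ∑ i, a i / (1 + waterFill θ √(a i / g i)) ≤ ∑ i, a i / (1 + y i) := by
  by_cases hpos : ∃ i, 0 < √(a i / g i) ∧ 0 < g i
  · obtain ⟨θ, hθ, rfl⟩ := exists_sum_mul_waterFill_eq (fun i => Real.sqrt_nonneg _) hg hP hpos
    exact ⟨θ, hθ.le, le_rfl, fun y hy hgy hsum => sum_div_one_add_waterFill_le hθ ha hg hy hgy hsum⟩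
  · refine ⟨0, le_rfl, by simpa [waterFill] using hP, fun y _ hgy _ => ?_⟩
    push Not at hpos
    refine Finset.sum_le_sum fun i _ => ?_
    rcases (hg i).eq_or_lt with hgi | hgi
    · simp [hgy i hgi.symm, waterFill]
    · have : a i = 0 := by
        by_contra hai
        exact (hpos i (Real.sqrt_pos.2 (div_pos ((ha i).lt_of_ne' hai) hgi))).not_gt hgi
      simp [this]

end WaterFilling

section Optimum

variable {𝕜 : Type*} [RCLike 𝕜] {k m n r s u : ℕ}

theorem isHermitian_mul_rectDiagonal_mul_conjTranspose (V : Matrix (Fin m) (Fin n) 𝕜)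
    (d : ℕ → ℝ) :
    (V * rectDiagonal 𝕜 n n d * Vᴴ).IsHermitian :=
  isHermitian_mul_mul_conjTranspose V (conjTranspose_rectDiagonal d)

theorem mul_rectDiagonal_apply (hnk : n ≤ k) (M : Matrix (Fin m) (Fin k) 𝕜) (d : ℕ → ℝ) (i : Fin m)
    (j : Fin n) : (M * rectDiagonal 𝕜 k n d) i j = M i (Fin.castLE hnk j) * (d j : 𝕜) := by
  rw [mul_apply, Finset.sum_eq_single (Fin.castLE hnk j)]
  · simp [rectDiagonal]
  · intro l _ hl
    have : (l : ℕ) ≠ j := fun h => hl (Fin.ext h)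
    simp [rectDiagonal, this]
  · simp

theorem mul_rectDiagonal_mul_conjTranspose_eq_sum (hkm : k ≤ m) (hkn : k ≤ n)
    (V : Matrix (Fin m) (Fin m) 𝕜) (U : Matrix (Fin n) (Fin n) 𝕜) {d : ℕ → ℝ}
    (hd : ∀ i, k ≤ i → i < n → d i = 0) :
    V * rectDiagonal 𝕜 m n d * Uᴴ = ∑ i : Fin k, (d i : 𝕜) •
      vecMulVec (V.col (Fin.castLE hkm i)) (star (U.col (Fin.castLE hkn i))) := by
  have factor_eq : V * rectDiagonal 𝕜 m n d * Uᴴ =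
      V * rectDiagonal 𝕜 m k d * (U * rectDiagonal 𝕜 n k 1)ᴴ := by
    have : rectDiagonal 𝕜 m k d * rectDiagonal 𝕜 k n 1 = rectDiagonal 𝕜 m n d := by
      rw [rectDiagonal_mul _ _ fun i hi _ hin => by rw [hd i hi hin, zero_mul], mul_one]
    rw [conjTranspose_mul, conjTranspose_rectDiagonal, ← this]
    simp only [Matrix.mul_assoc]
  rw [factor_eq]
  ext p q
  rw [mul_apply, Matrix.sum_apply]
  refine Finset.sum_congr rfl fun i _ => ?_
  rw [conjTranspose_apply, mul_rectDiagonal_apply hkm, mul_rectDiagonal_apply hkn]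
  simp [vecMulVec_apply, mul_left_comm, mul_comm, mul_assoc]

theorem relayPower_mul_rectDiagonal_mul {V : Matrix (Fin u) (Fin u) 𝕜}
    {U : Matrix (Fin s) (Fin s) 𝕜} (hV : V ∈ unitaryGroup (Fin u) 𝕜)
    (hU : U ∈ unitaryGroup (Fin s) 𝕜) (c : ℝ) (a : ℕ → ℝ) {d : ℕ → ℝ} (hd : ∀ i, u ≤ i → d i = 0) :
    relayPower c (U * rectDiagonal 𝕜 s s a * Uᴴ) (V * rectDiagonal 𝕜 u s d * Uᴴ) =
      ((∑ i : Fin s, (1 + c * a i) * d i ^ 2 : ℝ) : 𝕜) := by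
  have hV' : Vᴴ * V = 1 := mem_unitaryGroup_iff'.1 hV
  have hU' : Uᴴ * U = 1 := mem_unitaryGroup_iff'.1 hU
  rw [relayPower_conj c hU, Matrix.mul_assoc _ Uᴴ, hU', Matrix.mul_one, relayPower,
    one_add_smul_rectDiagonal, trace_mul_comm, conjTranspose_mul, ← Matrix.mul_assoc,
    Matrix.mul_assoc _ Vᴴ, ← Matrix.mul_assoc Vᴴ, hV', Matrix.one_mul, conjTranspose_rectDiagonal,
    rectDiagonal_mul _ _ fun i hi _ _ => by rw [hd i hi, zero_mul],
    rectDiagonal_mul_rectDiagonal_self, trace_rectDiagonal]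
  refine congr_arg _ (Finset.sum_congr rfl fun i _ => ?_)
  simp only [Pi.mul_apply]
  ring

theorem gainLoss_mul_rectDiagonal_mul {H : Matrix (Fin r) (Fin u) 𝕜}
    {V : Matrix (Fin u) (Fin u) 𝕜} {U : Matrix (Fin s) (Fin s) 𝕜} {τ : ℕ → ℝ}
    (hV : V ∈ unitaryGroup (Fin u) 𝕜)
    (hHV : Hᴴ * H = V * rectDiagonal 𝕜 u u (fun i => τ i ^ 2) * Vᴴ)
    (hU : U ∈ unitaryGroup (Fin s) 𝕜) (a : ℕ → ℝ) {d : ℕ → ℝ} (hd : ∀ i, u ≤ i → d i = 0) :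
    gainLoss (U * rectDiagonal 𝕜 s s a * Uᴴ) H (V * rectDiagonal 𝕜 u s d * Uᴴ) =
      ((∑ i : Fin s, a i / (1 + τ i ^ 2 * d i ^ 2) : ℝ) : 𝕜) := by
  have hV' : Vᴴ * V = 1 := mem_unitaryGroup_iff'.1 hV
  have hU' : Uᴴ * U = 1 := mem_unitaryGroup_iff'.1 hU
  have gram_eq : (V * rectDiagonal 𝕜 u s d)ᴴ * Hᴴ * H * (V * rectDiagonal 𝕜 u s d) =
      rectDiagonal 𝕜 s s fun i => τ i ^ 2 * d i ^ 2 := by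
    calc _ = rectDiagonal 𝕜 s u d * (Vᴴ * (Hᴴ * H) * V) * rectDiagonal 𝕜 u s d := by
          simp only [conjTranspose_mul, conjTranspose_rectDiagonal, Matrix.mul_assoc]
      _ = rectDiagonal 𝕜 s u d * ((Vᴴ * V) * rectDiagonal 𝕜 u u (fun i => τ i ^ 2) * (Vᴴ * V)) *
            rectDiagonal 𝕜 u s d := by
          simp only [hHV, Matrix.mul_assoc]
      _ = _ := by
          rw [hV', Matrix.one_mul, Matrix.mul_one, rectDiagonal_mul _ _ fun i _ _ _ => by lia,
            rectDiagonal_mul _ _ fun i hi _ _ => by simp [hd i hi]]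
          exact congr_arg _ (funext fun i => by simp only [Pi.mul_apply]; ring)
  have inv_eq : (1 + rectDiagonal 𝕜 s s fun i => τ i ^ 2 * d i ^ 2)⁻¹ =
      rectDiagonal 𝕜 s s fun i => (1 + τ i ^ 2 * d i ^ 2)⁻¹ := by
    have one_add := one_add_smul_rectDiagonal (𝕜 := 𝕜) (n := s) 1 fun i => τ i ^ 2 * d i ^ 2
    simp only [RCLike.ofReal_one, one_smul, one_mul] at one_add
    rw [one_add]
    refine inv_eq_right_inv ?_
    rw [rectDiagonal_mul_rectDiagonal_self, ← rectDiagonal_one]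
    exact congr_arg _ (funext fun i => mul_inv_cancel₀ (by positivity))
  rw [gainLoss_conj hU, Matrix.mul_assoc _ Uᴴ, hU', Matrix.mul_one, gainLoss, gram_eq, inv_eq,
    rectDiagonal_mul_rectDiagonal_self, trace_rectDiagonal]
  rfl

theorem exists_allocation_isMin {τ a : ℕ → ℝ} {c P : ℝ} (hτ : Antitone τ) (hτ0 : ∀ i, 0 ≤ τ i)
    (ha : Antitone a) (ha0 : ∀ i, 0 ≤ a i) (hc : 0 ≤ c) (hP : 0 ≤ P) :
    ∃ x : ℕ → ℝ, Antitone x ∧ (∀ i, 0 ≤ x i) ∧ (∀ i, τ i = 0 → x i = 0) ∧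
      ∑ i : Fin s, (1 + c * a i) / τ i ^ 2 * x i ≤ P ∧
      ∀ y : ℕ → ℝ, (∀ i, 0 ≤ y i) → (∀ i, τ i = 0 → y i = 0) →
        ∑ i : Fin s, (1 + c * a i) / τ i ^ 2 * y i ≤ P →
          ∑ i : Fin s, a i / (1 + x i) ≤ ∑ i : Fin s, a i / (1 + y i) := by
  have one_add_pos (i : ℕ) : 0 < 1 + c * a i := by have := ha0 i; positivity
  obtain ⟨θ, hθ, power_le, hmin⟩ := exists_waterFill_isMin (a := fun i : Fin s => a i)
    (g := fun i : Fin s => (1 + c * a i) / τ i ^ 2) (fun i => ha0 i)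
    (fun i => div_nonneg (one_add_pos i).le (sq_nonneg _)) hP
  have antitone_efficiency : Antitone fun i => √(a i / ((1 + c * a i) / τ i ^ 2)) := by
    intro i j hij
    refine Real.sqrt_le_sqrt ?_
    simp only [div_div_eq_mul_div, mul_div_right_comm]
    exact mul_le_mul (monotoneOn_div_one_add_mul hc (ha0 j) (ha0 i) (ha hij))
      (pow_le_pow_left₀ (hτ0 j) (hτ hij) 2) (sq_nonneg _) (div_nonneg (ha0 i) (one_add_pos i).le)
  refine ⟨fun i => waterFill θ √(a i / ((1 + c * a i) / τ i ^ 2)),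
    fun i j hij => monotone_waterFill hθ (antitone_efficiency hij), fun i => waterFill_nonneg _ _,
    fun i hi => by simp [hi, waterFill_zero], power_le,
    fun y hy hyτ hyP => hmin (fun i => y i) (fun i => hy i) (fun i hi => hyτ i ?_) hyP⟩
  simpa [(one_add_pos i).ne'] using hi

theorem HasSingularValues.exists_isMin_gainLoss {H : Matrix (Fin r) (Fin u) 𝕜}
    {V : Matrix (Fin u) (Fin u) 𝕜} {U A : Matrix (Fin s) (Fin s) 𝕜} {τ a : ℕ → ℝ} {c P : ℝ}
    (hH : HasSingularValues H τ) (hV : V ∈ unitaryGroup (Fin u) 𝕜)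
    (hHV : Hᴴ * H = V * rectDiagonal 𝕜 u u (fun i => τ i ^ 2) * Vᴴ)
    (hU : U ∈ unitaryGroup (Fin s) 𝕜)
    (hAU : A = U * rectDiagonal 𝕜 s s a * Uᴴ) (ha : Antitone a) (ha0 : ∀ i, 0 ≤ a i) (hc : 0 ≤ c)
    (hP : 0 ≤ P) :
    ∃ x : ℕ → ℝ, Antitone x ∧ (∀ i, 0 ≤ x i) ∧
      relayPower c A (V * rectDiagonal 𝕜 u s (fun i => √(x i / τ i ^ 2)) * Uᴴ) ≤ P ∧
      ∀ Y, relayPower c A Y ≤ P →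
        gainLoss A H (V * rectDiagonal 𝕜 u s (fun i => √(x i / τ i ^ 2)) * Uᴴ) ≤
          gainLoss A H Y := by
  have hA : A.IsHermitian := hAU ▸ isHermitian_mul_rectDiagonal_mul_conjTranspose U a
  obtain ⟨x, hx, hx0, hxτ, power_le, hmin⟩ :=
    exists_allocation_isMin (s := s) hH.antitone hH.nonneg ha ha0 hc hP
  have hd (i : ℕ) (hi : u ≤ i) : √(x i / τ i ^ 2) = 0 := by simp [hH.eq_zero i (by lia)]
  have sq_amplitude (i : ℕ) : √(x i / τ i ^ 2) ^ 2 = x i / τ i ^ 2 :=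
    Real.sq_sqrt (div_nonneg (hx0 i) (sq_nonneg _))
  have snr_eq (i : ℕ) : τ i ^ 2 * (x i / τ i ^ 2) = x i :=
    mul_div_cancel_of_imp' fun hi => hxτ i (pow_eq_zero_iff two_ne_zero |>.1 hi)
  refine ⟨x, hx, hx0, ?_, fun Y hY => ?_⟩
  · rw [hAU, relayPower_mul_rectDiagonal_mul hV hU c a hd, RCLike.ofReal_le_ofReal]
    simpa only [sq_amplitude, mul_div_assoc', div_mul_eq_mul_div] using power_le
  · obtain ⟨y, hy0, hyτ, y_power_le, y_loss_le⟩ := hH.exists_allocation_le hc ha ha0 (Y * U)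
    rw [← relayPower_conj c hU, ← hAU] at y_power_le
    rw [← gainLoss_conj hU, ← hAU] at y_loss_le
    have hYP : RCLike.re (relayPower c A Y) ≤ P := by simpa using (RCLike.le_iff_re_im.1 hY).1
    rw [← ofReal_re_gainLoss hA H Y, hAU, gainLoss_mul_rectDiagonal_mul hV hHV hU a hd, ← hAU,
      RCLike.ofReal_le_ofReal]
    simp only [sq_amplitude, snr_eq]
    exact (hmin y hy0 hyτ (y_power_le.trans hYP)).trans y_loss_le

theorem singularValues_toEuclideanLin_pos_iff (A : Matrix (Fin m) (Fin n) 𝕜) {i : ℕ} :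
    0 < (toEuclideanLin A).singularValues i ↔ i < A.rank := by
  rw [LinearMap.singularValues_pos_iff_lt_finrank_range,
    A.rank_eq_finrank_range_toLin (EuclideanSpace.basisFun (Fin m) 𝕜).toBasis
      (EuclideanSpace.basisFun (Fin n) 𝕜).toBasis, toEuclideanLin_eq_toLin_orthonormal]

/-- `μ` lists the largest eigenvalues of `A` in nonincreasing order, with multiplicity, and `v` is
an orthonormal list of eigenvectors for them. Being largest is expressed by extending `μ` to a
nonincreasing enumeration `d` of all the eigenvalues. -/
structure IsLeadingEigensystem (A : Matrix (Fin n) (Fin n) 𝕜) (μ : Fin k → ℝ)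
    (v : Fin k → Fin n → 𝕜) : Prop where
  orthonormal : ∀ i j, star (v i) ⬝ᵥ v j = if i = j then 1 else 0
  mulVec_eq : ∀ i, A *ᵥ v i = (μ i : 𝕜) • v i
  antitone : Antitone μ
  exists_perm : ∃ (hA : A.IsHermitian) (d : Fin n → ℝ) (σ : Equiv.Perm (Fin n)),
    Antitone d ∧ d = hA.eigenvalues ∘ σ ∧ ∀ (i : Fin k) (hi : (i : ℕ) < n), μ i = d ⟨i, hi⟩

theorem isLeadingEigensystem_col {A V : Matrix (Fin n) (Fin n) 𝕜} {d : ℕ → ℝ} (hkn : k ≤ n)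
    (hV : V ∈ unitaryGroup (Fin n) 𝕜) (hAV : A = V * rectDiagonal 𝕜 n n d * Vᴴ) (hd : Antitone d) :
    IsLeadingEigensystem A (fun i : Fin k => d i) fun i => V.col (Fin.castLE hkn i) where
  orthonormal i j := by
    have := congr_fun₂ (mem_unitaryGroup_iff'.1 hV) (Fin.castLE hkn i) (Fin.castLE hkn j)
    simpa [mul_apply, dotProduct, one_apply, star_apply, col] using this
  mulVec_eq i := by
    have hV' : Vᴴ * V = 1 := mem_unitaryGroup_iff'.1 hV
    have mul_eq : A * V = V * rectDiagonal 𝕜 n n d := by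
      rw [hAV, Matrix.mul_assoc, hV', Matrix.mul_one]
    ext p
    have := congr_fun₂ mul_eq p (Fin.castLE hkn i)
    rw [mul_rectDiagonal_apply le_rfl] at this
    simpa [mul_apply, mulVec, dotProduct, mul_comm] using this
  antitone := fun i j hij => hd hij
  exists_perm := by
    have hA : A.IsHermitian := hAV ▸ isHermitian_mul_rectDiagonal_mul_conjTranspose V d
    rw [rectDiagonal_self] at hAV
    have hd' : Antitone fun i : Fin n => d i := fun i j hij => hd hij
    obtain ⟨σ, hσ⟩ := exists_perm_eq_eigenvalues_comp hA hd' hV hAV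
    exact ⟨hA, _, σ, hd', hσ, fun _ _ => rfl⟩

end Optimum

theorem stmt_18_general {𝕜 : Type*} [RCLike 𝕜] {t s r u : ℕ} (H₁ : Matrix (Fin s) (Fin t) 𝕜)
    (H₂ : Matrix (Fin r) (Fin u) 𝕜) {c P₂ : ℝ} (hc : 0 ≤ c) (hP₂ : 0 ≤ P₂) :
    ∃ (X : Matrix (Fin u) (Fin s) 𝕜) (x μ ν : Fin (min s H₂.rank) → ℝ)
      (v : Fin (min s H₂.rank) → Fin u → 𝕜) (w : Fin (min s H₂.rank) → Fin s → 𝕜),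
      relayPower c (H₁ * H₁ᴴ) X ≤ P₂ ∧
      (∀ Y, relayPower c (H₁ * H₁ᴴ) Y ≤ P₂ →
        gainLoss (H₁ * H₁ᴴ) H₂ X ≤ gainLoss (H₁ * H₁ᴴ) H₂ Y) ∧
      X = ∑ i, (√(x i / μ i) : 𝕜) • vecMulVec (v i) (star (w i)) ∧
      Antitone x ∧ (∀ i, 0 ≤ x i) ∧ (∀ i, 0 < μ i) ∧
      IsLeadingEigensystem (H₂ᴴ * H₂) μ v ∧ IsLeadingEigensystem (H₁ * H₁ᴴ) ν w := by
  have hH₁ := (hasSingularValues_singularValues H₁).conjTranspose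
  have hH₂ := hasSingularValues_singularValues H₂
  set σ := (toEuclideanLin H₁).singularValues
  set τ := (toEuclideanLin H₂).singularValues with hτ
  obtain ⟨U, hU, hH₁U⟩ := hH₁.exists_conjTranspose_mul_self
  obtain ⟨V, hV, hH₂V⟩ := hH₂.exists_conjTranspose_mul_self
  rw [conjTranspose_conjTranspose] at hH₁U
  obtain ⟨x, hx, hx0, power_le, hmin⟩ :=
    hH₂.exists_isMin_gainLoss hV hH₂V hU hH₁U hH₁.antitone_sq (fun i => sq_nonneg (σ i)) hc hP₂
  have hs : min s H₂.rank ≤ s := min_le_left _ _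
  have hu : min s H₂.rank ≤ u := (min_le_right _ _).trans H₂.rank_le_width
  have amplitude_eq_zero (i : ℕ) (hi : min s H₂.rank ≤ i) (his : i < s) :
      √(x i / τ i ^ 2) = 0 := by
    have : ¬0 < τ i := by rw [hτ, singularValues_toEuclideanLin_pos_iff]; lia
    simp [le_antisymm (not_lt.1 this) (hH₂.nonneg i)]
  have τ_pos (i : Fin (min s H₂.rank)) : 0 < τ i :=
    (singularValues_toEuclideanLin_pos_iff H₂).2 (lt_min_iff.1 i.2).2
  exact ⟨_, _, _, _, _, _, power_le, hmin,
    mul_rectDiagonal_mul_conjTranspose_eq_sum hu hs V U amplitude_eq_zero,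
    fun _ _ hij => hx hij, fun i => hx0 i, fun i => pow_pos (τ_pos i) 2,
    isLeadingEigensystem_col hu hV hH₂V hH₂.antitone_sq,
    isLeadingEigensystem_col hs hU hH₁U hH₁.antitone_sq⟩

theorem stmt_18 (t s r u : ℕ)
    (H₁ : Matrix (Fin s) (Fin t) ℂ) (H₂ : Matrix (Fin r) (Fin u) ℂ)
    (c P₂ : ℝ) (hc : 0 < c) (hP₂ : 0 < P₂)
    (S : Set (Matrix (Fin u) (Fin s) ℂ))
    (hS : S = {X | (X * (1 + (c : ℂ) • (H₁ * H₁ᴴ)) * Xᴴ).trace ≤ (P₂ : ℂ)})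
    (T : Matrix (Fin u) (Fin s) ℂ → ℂ)
    (hT : T = fun X => (H₁ * H₁ᴴ * (1 + Xᴴ * H₂ᴴ * H₂ * X)⁻¹).trace)
    (ρ : ℕ) (hρ : ρ = min s H₂.rank) :
    ∃ (Xstar : Matrix (Fin u) (Fin s) ℂ) (x μ ν : Fin ρ → ℝ)
      (v : Fin ρ → (Fin u → ℂ)) (w : Fin ρ → (Fin s → ℂ)),
      Xstar ∈ S ∧ (∀ X ∈ S, T Xstar ≤ T X) ∧
      Xstar = ∑ i, (Real.sqrt (x i / μ i) : ℂ) • vecMulVec (v i) (star (w i)) ∧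
      Antitone x ∧ (∀ i, 0 ≤ x i) ∧
      (∀ i j, star (v i) ⬝ᵥ v j = if i = j then 1 else 0) ∧
      (∀ i j, star (w i) ⬝ᵥ w j = if i = j then 1 else 0) ∧
      (∀ i, (H₂ᴴ * H₂).mulVec (v i) = (μ i : ℂ) • v i) ∧
      Antitone μ ∧ (∀ i, 0 < μ i) ∧
      (∃ (hB : (H₂ᴴ * H₂).IsHermitian) (d : Fin u → ℝ) (σ : Equiv.Perm (Fin u)),
        Antitone d ∧ d = hB.eigenvalues ∘ σ ∧
        ∀ (i : Fin ρ) (hi : (i : ℕ) < u), μ i = d ⟨i, hi⟩) ∧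
      (∀ i, (H₁ * H₁ᴴ).mulVec (w i) = (ν i : ℂ) • w i) ∧ Antitone ν ∧
      (∃ (hAh : (H₁ * H₁ᴴ).IsHermitian) (dA : Fin s → ℝ) (σ : Equiv.Perm (Fin s)),
        Antitone dA ∧ dA = hAh.eigenvalues ∘ σ ∧
        ∀ (i : Fin ρ) (hi : (i : ℕ) < s), ν i = dA ⟨i, hi⟩) := by
  subst hS hT hρ
  obtain ⟨X, x, μ, ν, v, w, power_le, hmin, hX, hx, hx0, hμ0, hv, hw⟩ :=
    stmt_18_general H₁ H₂ hc.le hP₂.le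
  exact ⟨X, x, μ, ν, v, w, power_le, hmin, hX, hx, hx0, hv.orthonormal, hw.orthonormal,
    hv.mulVec_eq, hv.antitone, hμ0, hv.exists_perm, hw.mulVec_eq, hw.antitone, hw.exists_perm⟩
end
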